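/- Let k ≥ 2 be an integer and A ⊆ F_p a finite set satisfying |A||(k-1)A||AA| ≤ p². Then T_k(A) ≲ |A|^{k-3/2} T_{k-1}(A)^{1/2} |AA|^{3/2} + |A|^{2k-3}|AA| + T_{k-1}(A)|AA|²/|A|, where T_k(A) counts solutions of a_1+...+a_k = a_{k+1}+...+a_{2k} with a_i ∈ A, and ≲ hides absolute constants and logarithmic factors. -/

import Mathlib

open Pointwise

/-!
Write `T_k(A) = ∑ (r * 1_A)²` with `r` the representation function of `(k - 1)A`. Splitting `r`
dyadically costs logarithms and reduces the bound to the energies `E(A, S)` of its level sets `S`.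
For nonzero `b, b' ∈ A`, a solution of `a + s = a' + s'` in `A` and `S` can be written
`ab * b⁻¹ + s = a'b' * b'⁻¹ + s'`, an incidence between a line with parameters in `AA`, `A⁻¹`, `S`
and another such line, taken from two families of lines in coordinate slices of affine 3-space.

Incidences are bounded by Guth and Katz's polynomial method. After a generic projective
transformation over a transcendental extension, the lines of one family that lie in a common regulus
are determined by one of their original coordinates, so there are few of them. The lines of the
other family lie on a surface of degree `O(√N)`, which is less than `p`; a univariate polynomial of
such a degree whose derivative vanishes is constant, and this saves the flecnode argument in
characteristic `p`. If an irreducible component `f` does not divide its flecnode polynomial, or if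
its lines in one family are all singular, then apart from lines that meet few others there are
`O(deg(f)²)` lines, by a resultant, and induction on `N` applies. Otherwise `f` is ruled, hence a
bilinear surface, and its lines in that family form a regulus.
-/

namespace LineIncidence

section Univariate

open Polynomial

theorem card_le_natDegree_of_isRoot {R ι : Type*} [CommRing R] [IsDomain R]
    {s : Finset ι} {φ : ι → R} (hφ : Set.InjOn φ s) {p : R[X]} (hp : p ≠ 0)
    (hroot : ∀ i ∈ s, p.IsRoot (φ i)) : s.card ≤ p.natDegree := by
  classical
  calc s.card ≤ p.roots.toFinset.card :=
        Finset.card_le_card_of_injOn φ (fun i hi ↦ by simpa [hp] using hroot i hi) hφ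
    _ ≤ p.natDegree := (Multiset.toFinset_card_le _).trans p.card_roots'

theorem resultant_ne_zero_of_irreducible {R : Type*} [CommRing R] [IsDomain R] [IsGCDMonoid R]
    {f g : R[X]} (hf : Irreducible f) (hdeg : f.natDegree ≠ 0) (hfg : ¬ f ∣ g) :
    f.resultant g ≠ 0 := by
  let φ := algebraMap R (FractionRing R)
  have hφ : Function.Injective φ := IsFractionRing.injective _ _
  have hprim := hf.isPrimitive hdeg
  have hcop : IsCoprime (f.map φ) (g.map φ) :=
    (hprim.irreducible_iff_irreducible_map_fraction_map.mp hf).coprime_iff_not_dvd.mpr fun h ↦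
      hfg ((hprim.dvd_iff_fraction_map_dvd_fraction_map (FractionRing R)).mpr h)
  have hmap := resultant_ne_zero _ _ hcop
  rw [natDegree_map_eq_of_injective hφ, natDegree_map_eq_of_injective hφ,
    resultant_map_map] at hmap
  exact fun h ↦ hmap (by rw [h, map_zero])

theorem pow_dvd_of_pow_dvd_derivative {K : Type*} [Field K] {q : K[X]} {v : K} {m : ℕ}
    (hm : (m : K) ≠ 0) (hq : (X - C v) ^ m ∣ q) (hq' : (X - C v) ^ m ∣ derivative q) :
    (X - C v) ^ (m + 1) ∣ q := by
  obtain ⟨n, rfl⟩ := Nat.exists_eq_succ_of_ne_zero (by rintro rfl; simp at hm : m ≠ 0)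
  obtain ⟨ψ, rfl⟩ := hq
  rw [derivative_mul, derivative_X_sub_C_pow, Nat.succ_sub_one, dvd_add_left (dvd_mul_right _ _),
    pow_succ (_ - _) n, mul_assoc, mul_left_comm,
    mul_dvd_mul_iff_left (pow_ne_zero n (X_sub_C_ne_zero v)), dvd_C_mul hm] at hq'
  rw [pow_succ (_ - _) (n + 1)]
  exact mul_dvd_mul_left _ hq'

theorem eq_zero_of_mul_derivative_derivative_eq {K : Type*} [Field K] {p : ℕ} [CharP K p]
    {φ a b c : K[X]} {v : K}
    (hode : a * derivative (derivative φ) = b * φ + c * derivative φ)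
    (ha : ¬ a.IsRoot v) (hφ : φ.IsRoot v) (hφ' : (derivative φ).IsRoot v)
    (hdeg : φ.natDegree < p) : φ = 0 := by
  by_contra hφ0
  obtain ⟨k, hk⟩ : ∃ k, φ.rootMultiplicity v = k + 1 + 1 :=
    Nat.exists_eq_add_of_le' ((one_lt_rootMultiplicity_iff_isRoot hφ0).mpr ⟨hφ, hφ'⟩)
  have hdvd : (X - C v) ^ (k + 1 + 1) ∣ φ := (le_rootMultiplicity_iff hφ0).mp hk.ge
  have hkp : k + 1 + 1 < p := by
    have := natDegree_le_of_dvd hdvd hφ0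
    rw [natDegree_pow, natDegree_X_sub_C, mul_one] at this
    omega
  have hcast {n : ℕ} (hn : n < p) (hn0 : 0 < n) : (n : K) ≠ 0 := fun h ↦
    Nat.not_dvd_of_pos_of_lt hn0 hn ((CharP.cast_eq_zero_iff K p n).mp h)
  have hdvd' : (X - C v) ^ (k + 1) ∣ derivative φ := by
    simpa only [Nat.add_sub_cancel] using pow_sub_one_dvd_derivative_of_pow_dvd hdvd
  have hdvd'' : (X - C v) ^ (k + 1) ∣ derivative (derivative φ) := by
    have hcop : IsCoprime (X - C v) a :=
      (irreducible_X_sub_C v).coprime_iff_not_dvd.mpr (dvd_iff_isRoot.not.mpr ha)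
    refine hcop.pow_left.dvd_of_dvd_mul_left ?_
    rw [hode]
    exact dvd_add ((dvd_of_mul_right_dvd hdvd).mul_left b) (hdvd'.mul_left c)
  have hgain' : (X - C v) ^ (k + 1 + 1) ∣ derivative φ :=
    pow_dvd_of_pow_dvd_derivative (hcast (by omega) k.succ_pos) hdvd' hdvd''
  have hgain : (X - C v) ^ (k + 1 + 1 + 1) ∣ φ :=
    pow_dvd_of_pow_dvd_derivative (hcast hkp (Nat.succ_pos _)) hdvd hgain'
  have := (le_rootMultiplicity_iff hφ0).mpr hgain
  omega

end Univariate

open MvPolynomial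

section Elimination

theorem totalDegree_det_le {R σ ι : Type*} [CommRing R] [Fintype ι] [DecidableEq ι]
    {M : Matrix ι ι (MvPolynomial σ R)} {N : ℕ} (h : ∀ i j, (M i j).totalDegree ≤ N) :
    M.det.totalDegree ≤ Fintype.card ι * N := by
  rw [Matrix.det_apply']
  refine totalDegree_finsetSum_le fun τ _ ↦ ?_
  rw [← map_intCast (C : R →+* MvPolynomial σ R)]
  refine (totalDegree_mul _ _).trans ?_
  rw [totalDegree_C, zero_add]
  calc (∏ i, M (τ i) i).totalDegree ≤ ∑ i, (M (τ i) i).totalDegree := totalDegree_finsetProd _ _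
    _ ≤ ∑ _i : ι, N := Finset.sum_le_sum fun i _ ↦ h (τ i) i
    _ = Fintype.card ι * N := by simp

theorem totalDegree_coeff_finSuccEquiv_le {R : Type*} [CommSemiring R] {n : ℕ}
    (f : MvPolynomial (Fin (n + 1)) R) (i : ℕ) :
    ((finSuccEquiv R n f).coeff i).totalDegree ≤ f.totalDegree := by
  rcases eq_or_ne ((finSuccEquiv R n f).coeff i) 0 with h | h
  · simp [h]
  · exact le_of_add_le_left (totalDegree_coeff_finSuccEquiv_add_le f i h)

theorem finSuccEquiv_rename_succ {R : Type*} [CommSemiring R] {n : ℕ} (r : MvPolynomial (Fin n) R) :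
    finSuccEquiv R n (rename Fin.succ r) = Polynomial.C r := by
  induction r using MvPolynomial.induction_on with
  | C a => simp [finSuccEquiv_apply]
  | add p q hp hq => simp only [map_add, hp, hq]
  | mul_X p i hp => simp only [map_mul, hp, rename_X, finSuccEquiv_X_succ]

theorem totalDegree_resultant_finSuccEquiv_le {R : Type*} [CommRing R] {n : ℕ}
    (f g : MvPolynomial (Fin (n + 1)) R) :
    ((finSuccEquiv R n f).resultant (finSuccEquiv R n g)).totalDegree ≤
      (f.totalDegree + g.totalDegree) * max f.totalDegree g.totalDegree := by
  have hcoeff : ∀ i j, (Polynomial.sylvester (finSuccEquiv R n f) (finSuccEquiv R n g)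
      (finSuccEquiv R n f).natDegree (finSuccEquiv R n g).natDegree i j).totalDegree ≤
        max f.totalDegree g.totalDegree := by
    intro i j
    simp only [Polynomial.sylvester, Matrix.of_apply]
    induction j using Fin.addCases <;>
    · simp only [Fin.addCases_left, Fin.addCases_right]
      split_ifs <;> simp [totalDegree_coeff_finSuccEquiv_le]
  refine (totalDegree_det_le hcoeff).trans ?_
  rw [Fintype.card_fin, natDegree_finSuccEquiv, natDegree_finSuccEquiv]
  gcongr <;> exact degreeOf_le_totalDegree _ _

theorem exists_elimination {K : Type*} [Field K] {n : ℕ} {f g : MvPolynomial (Fin (n + 1)) K}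
    (hf : Irreducible f) (hdeg : f.degreeOf 0 ≠ 0) (hfg : ¬ f ∣ g) :
    ∃ (r : MvPolynomial (Fin n) K) (a b : MvPolynomial (Fin (n + 1)) K), r ≠ 0 ∧
      r.totalDegree ≤ (f.totalDegree + g.totalDegree) * max f.totalDegree g.totalDegree ∧
      f * a + g * b = rename Fin.succ r := by
  let e := finSuccEquiv K n
  have hdeg' : (e f).natDegree ≠ 0 := by rwa [natDegree_finSuccEquiv]
  obtain ⟨a, b, -, -, hab⟩ :=
    Polynomial.exists_mul_add_mul_eq_C_resultant (e f) (e g) le_rfl le_rfl (Or.inl hdeg')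
  refine ⟨(e f).resultant (e g), e.symm a, e.symm b,
    resultant_ne_zero_of_irreducible ((MulEquiv.irreducible_iff e).mpr hf) hdeg'
      ((map_dvd_iff e).not.mpr hfg),
    totalDegree_resultant_finSuccEquiv_le f g, e.injective ?_⟩
  simpa [e, finSuccEquiv_rename_succ] using hab

end Elimination

/-- A line lying in a coordinate slice of the affine space `K³` with coordinates `(y, u, v)`.
It is read either as the `U`-line `{u = pos, y = slope * v + icpt}` or as the `V`-line
`{v = pos, y = slope * u + icpt}`. -/
@[ext]
structure SliceLine (K : Type*) where
  /-- The value of the constant coordinate. -/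
  pos : K
  /-- The slope with respect to the free coordinate. -/
  slope : K
  /-- The value of `y` where the free coordinate vanishes. -/
  icpt : K

/-- The `U`-line `l` and the `V`-line `m` have a common point, which can only be the point
with `u = l.pos` and `v = m.pos`. -/
def Meets {K : Type*} [Semiring K] (l m : SliceLine K) : Prop :=
  l.slope * m.pos + l.icpt = m.slope * l.pos + m.icpt

instance {K : Type*} [Semiring K] [DecidableEq K] : DecidableRel (Meets (K := K)) :=
  fun _ _ ↦ decEq _ _

instance {K : Type*} [Semiring K] : Std.Symm (Meets (K := K)) :=
  ⟨fun _ _ h ↦ Eq.symm h⟩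

section Restriction

variable {K : Type*} [Field K]

/-- The exchange `u ↔ v` on polynomials in `(y, u, v) = (X 0, X 1, X 2)`. -/
noncomputable def swapUV : MvPolynomial (Fin 3) K ≃ₐ[K] MvPolynomial (Fin 3) K :=
  renameEquiv K (Equiv.swap 1 2)

/-- Restriction of a polynomial in `(y, u, v) = (X 0, X 1, X 2)` to a `U`-line, which is
parametrized by `v`. -/
noncomputable def restrictU (l : SliceLine K) : MvPolynomial (Fin 3) K →ₐ[K] Polynomial K :=
  aeval ![Polynomial.C l.slope * Polynomial.X + Polynomial.C l.icpt, Polynomial.C l.pos,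
    Polynomial.X]

/-- Restriction of a polynomial in `(y, u, v) = (X 0, X 1, X 2)` to a `V`-line, which is
parametrized by `u`. -/
noncomputable def restrictV (m : SliceLine K) : MvPolynomial (Fin 3) K →ₐ[K] Polynomial K :=
  (restrictU m).comp swapUV.toAlgHom

theorem restrictU_X (l : SliceLine K) (i : Fin 3) :
    restrictU l (X i) = ![Polynomial.C l.slope * Polynomial.X + Polynomial.C l.icpt,
      Polynomial.C l.pos, Polynomial.X] i :=
  aeval_X _ _

theorem restrictU_C (l : SliceLine K) (a : K) : restrictU l (C a) = Polynomial.C a :=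
  aeval_C _ _

theorem swapUV_X (i : Fin 3) : swapUV (X i : MvPolynomial (Fin 3) K) = X (Equiv.swap 1 2 i) := by
  simp [swapUV]

theorem swapUV_swapUV (f : MvPolynomial (Fin 3) K) : swapUV (swapUV f) = f := by
  simp [swapUV, rename_rename, ← Equiv.coe_trans]

theorem totalDegree_swapUV (f : MvPolynomial (Fin 3) K) :
    (swapUV f).totalDegree = f.totalDegree :=
  totalDegree_renameEquiv _ _

theorem restrictU_swapUV (l : SliceLine K) (f : MvPolynomial (Fin 3) K) :
    restrictU l (swapUV f) = restrictV l f :=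
  rfl

theorem restrictV_swapUV (l : SliceLine K) (f : MvPolynomial (Fin 3) K) :
    restrictV l (swapUV f) = restrictU l f := by
  rw [← restrictU_swapUV, swapUV_swapUV]

theorem restrictV_X (m : SliceLine K) (i : Fin 3) :
    restrictV m (X i) = ![Polynomial.C m.slope * Polynomial.X + Polynomial.C m.icpt,
      Polynomial.X, Polynomial.C m.pos] i := by
  rw [← restrictU_swapUV, swapUV_X, restrictU_X]
  fin_cases i <;> simp [Equiv.swap_apply_of_ne_of_ne]

theorem restrictV_C (m : SliceLine K) (a : K) : restrictV m (C a) = Polynomial.C a := by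
  simp [restrictV, restrictU]

theorem natDegree_restrictU_le (l : SliceLine K) (f : MvPolynomial (Fin 3) K) :
    (restrictU l f).natDegree ≤ f.totalDegree := by
  refine (aeval_natDegree_le (n := 1) f le_rfl _ fun i ↦ ?_).trans (mul_one _).le
  fin_cases i
  · exact Polynomial.natDegree_linear_le
  · simp
  · simp

theorem eval_aeval_polynomial {R σ : Type*} [CommSemiring R] (t : R) (φ : σ → Polynomial R)
    (f : MvPolynomial σ R) : (aeval φ f).eval t = eval (fun i ↦ (φ i).eval t) f := by
  induction f using MvPolynomial.induction_on with
  | C a => simp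
  | add p q hp hq => simp only [map_add, Polynomial.eval_add, hp, hq]
  | mul_X p i hp => simp only [map_mul, Polynomial.eval_mul, hp, aeval_X, eval_X]

theorem eval_restrictU (l : SliceLine K) (f : MvPolynomial (Fin 3) K) (t : K) :
    (restrictU l f).eval t = eval ![l.slope * t + l.icpt, l.pos, t] f := by
  rw [restrictU, eval_aeval_polynomial]
  congr 2
  ext i
  fin_cases i <;> simp

theorem eval_restrictV (m : SliceLine K) (f : MvPolynomial (Fin 3) K) (t : K) :
    (restrictV m f).eval t = eval ![m.slope * t + m.icpt, t, m.pos] f := by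
  rw [← restrictU_swapUV, eval_restrictU, swapUV, renameEquiv_apply, eval_rename]
  congr 2
  ext i
  fin_cases i <;> simp [Equiv.swap_apply_of_ne_of_ne]

theorem Meets.eval_restrict_eq {l m : SliceLine K} (h : Meets l m) (f : MvPolynomial (Fin 3) K) :
    (restrictU l f).eval m.pos = (restrictV m f).eval l.pos := by
  rw [eval_restrictU, eval_restrictV, h]

theorem aeval_restrictU_rename_succ (l : SliceLine K) (r : MvPolynomial (Fin 2) K) :
    Polynomial.aeval (X 0 : MvPolynomial (Fin 1) K) (restrictU l (rename Fin.succ r)) =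
      (finSuccEquiv K 1 r).eval (C l.pos) := by
  induction r using MvPolynomial.induction_on with
  | C a => simp [finSuccEquiv_apply, algebraMap_eq]
  | add p q hp hq => simp only [map_add, Polynomial.eval_add, hp, hq]
  | mul_X p i hp =>
    simp only [map_mul, Polynomial.eval_mul, hp]
    congr 1
    induction i using Fin.cases with
    | zero => simp [restrictU, finSuccEquiv_X_zero, algebraMap_eq]
    | succ j =>
      rw [Subsingleton.elim j 0, finSuccEquiv_X_succ]
      simp [restrictU]

theorem card_le_of_restrictU_rename_succ_eq_zero {R : Finset (SliceLine K)}
    (hR : Set.InjOn SliceLine.pos (R : Set (SliceLine K))) {r : MvPolynomial (Fin 2) K}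
    (hr : r ≠ 0) (h : ∀ l ∈ R, restrictU l (rename Fin.succ r) = 0) :
    R.card ≤ r.totalDegree := by
  have hr' : finSuccEquiv K 1 r ≠ 0 := by simpa using hr
  calc R.card ≤ (finSuccEquiv K 1 r).natDegree :=
        card_le_natDegree_of_isRoot ((C_injective (Fin 1) K).comp_injOn hR) hr' fun l hl ↦ by
          rw [Polynomial.IsRoot, Function.comp_apply, ← aeval_restrictU_rename_succ, h l hl,
            map_zero]
    _ = r.degreeOf 0 := natDegree_finSuccEquiv r
    _ ≤ r.totalDegree := degreeOf_le_totalDegree r 0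

theorem card_le_of_restrictV_rename_succ_eq_zero {G : Finset (SliceLine K)}
    (hG : Set.InjOn SliceLine.pos (G : Set (SliceLine K))) {r : MvPolynomial (Fin 2) K}
    (hr : r ≠ 0) (h : ∀ m ∈ G, restrictV m (rename Fin.succ r) = 0) :
    G.card ≤ r.totalDegree := by
  let e : MvPolynomial (Fin 2) K ≃ₐ[K] MvPolynomial (Fin 2) K := renameEquiv K (Equiv.swap 0 1)
  have hswap : rename Fin.succ (e r) = swapUV (rename Fin.succ r) := by
    simp only [e, swapUV, renameEquiv_apply, rename_rename]
    congr 2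
    decide
  calc G.card ≤ (e r).totalDegree :=
        card_le_of_restrictU_rename_succ_eq_zero hG (by simpa using hr) fun m hm ↦ by
          rw [hswap, restrictU_swapUV, h m hm]
    _ = r.totalDegree := totalDegree_renameEquiv _ _

variable [DecidableEq K]

theorem card_filter_meets_le_totalDegree {G : Finset (SliceLine K)}
    (hG : Set.InjOn SliceLine.pos (G : Set (SliceLine K))) {f : MvPolynomial (Fin 3) K}
    (hf : ∀ m ∈ G, restrictV m f = 0) {l : SliceLine K} (hl : restrictU l f ≠ 0) :
    (G.filter (Meets l)).card ≤ f.totalDegree := by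
  refine (card_le_natDegree_of_isRoot (hG.mono (Finset.coe_subset.mpr (Finset.filter_subset _ _)))
    hl fun m hm ↦ ?_).trans (natDegree_restrictU_le l f)
  obtain ⟨hmG, hlm⟩ := Finset.mem_filter.mp hm
  rw [Polynomial.IsRoot, hlm.eval_restrict_eq, hf m hmG, Polynomial.eval_zero]

theorem card_filter_meets_le_totalDegree' {R : Finset (SliceLine K)}
    (hR : Set.InjOn SliceLine.pos (R : Set (SliceLine K))) {f : MvPolynomial (Fin 3) K}
    (hf : ∀ l ∈ R, restrictU l f = 0) {m : SliceLine K} (hm : restrictV m f ≠ 0) :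
    (R.filter (Meets m)).card ≤ f.totalDegree := by
  rw [← totalDegree_swapUV]
  exact card_filter_meets_le_totalDegree hR (fun l hl ↦ by rw [restrictV_swapUV, hf l hl]) hm

end Restriction

section Flecnode

theorem derivative_aeval_polynomial {R σ : Type*} [CommSemiring R] [Fintype σ]
    (φ : σ → Polynomial R) (f : MvPolynomial σ R) :
    Polynomial.derivative (aeval φ f) =
      ∑ i, aeval φ (pderiv i f) * Polynomial.derivative (φ i) := by
  classical
  induction f using MvPolynomial.induction_on with
  | C a => simp
  | add p q hp hq => simp only [map_add, hp, hq, add_mul, Finset.sum_add_distrib]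
  | mul_X p j hp =>
    simp only [map_mul, Polynomial.derivative_mul, hp, aeval_X, pderiv_mul, map_add, pderiv_X,
      add_mul, Finset.sum_add_distrib, Finset.sum_mul, Pi.single_apply, apply_ite (aeval φ),
      map_zero, mul_ite, ite_mul, mul_one, mul_zero, zero_mul, Finset.sum_ite_eq,
      Finset.mem_univ, if_true]
    congr 1
    exact Finset.sum_congr rfl fun i _ ↦ by ring

theorem totalDegree_pderiv_le {R σ : Type*} [CommSemiring R] (i : σ) (f : MvPolynomial σ R) :
    (pderiv i f).totalDegree ≤ f.totalDegree - 1 := by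
  rw [totalDegree, Finset.sup_le_iff]
  intro m hm
  rw [mem_support_iff, coeff_pderiv] at hm
  have hdeg := le_totalDegree (mem_support_iff.mpr (left_ne_zero_of_mul hm))
  rw [Finsupp.sum_add_index' (by simp) (by simp), Finsupp.sum_single_index rfl] at hdeg
  omega

variable {K : Type*} [Field K]

theorem derivative_restrictU (l : SliceLine K) (f : MvPolynomial (Fin 3) K) :
    Polynomial.derivative (restrictU l f) =
      Polynomial.C l.slope * restrictU l (pderiv 0 f) + restrictU l (pderiv 2 f) := by
  rw [restrictU, derivative_aeval_polynomial, Fin.sum_univ_three]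
  simp
  ring

/-- The flecnode polynomial of the surface `f = 0` relative to `U`-lines: on a `U`-line tangent
to the surface it is, up to the factor `(∂f/∂y)²`, the second derivative of `f` along the line. -/
noncomputable def flecnode (f : MvPolynomial (Fin 3) K) : MvPolynomial (Fin 3) K :=
  pderiv 2 (pderiv 2 f) * pderiv 0 f * pderiv 0 f
    - (pderiv 2 (pderiv 0 f) + pderiv 0 (pderiv 2 f)) * pderiv 2 f * pderiv 0 f
    + pderiv 0 (pderiv 0 f) * pderiv 2 f * pderiv 2 f

theorem totalDegree_flecnode_le (f : MvPolynomial (Fin 3) K) :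
    (flecnode f).totalDegree ≤ 3 * f.totalDegree := by
  have hpd (i) : (pderiv i f).totalDegree ≤ f.totalDegree :=
    (totalDegree_pderiv_le i f).trans (Nat.sub_le _ _)
  have hpd₂ (i j) : (pderiv i (pderiv j f)).totalDegree ≤ f.totalDegree :=
    ((totalDegree_pderiv_le i _).trans (Nat.sub_le _ _)).trans (hpd j)
  have hmul {a b c : MvPolynomial (Fin 3) K} (ha : a.totalDegree ≤ f.totalDegree)
      (hb : b.totalDegree ≤ f.totalDegree) (hc : c.totalDegree ≤ f.totalDegree) :
      (a * b * c).totalDegree ≤ 3 * f.totalDegree := by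
    have h₁ := totalDegree_mul (a * b) c
    have h₂ := totalDegree_mul a b
    omega
  refine (totalDegree_add _ _).trans (max_le ((totalDegree_sub _ _).trans (max_le ?_ ?_)) ?_)
  · exact hmul (hpd₂ _ _) (hpd _) (hpd _)
  · exact hmul ((totalDegree_add _ _).trans (max_le (hpd₂ _ _) (hpd₂ _ _))) (hpd _) (hpd _)
  · exact hmul (hpd₂ _ _) (hpd _) (hpd _)

theorem exists_restrictU_flecnode_eq (l : SliceLine K) (f : MvPolynomial (Fin 3) K) :
    ∃ s, restrictU l (flecnode f) =
      restrictU l (pderiv 0 f) ^ 2 * Polynomial.derivative (Polynomial.derivative (restrictU l f))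
        + Polynomial.derivative (restrictU l f) * s := by
  refine ⟨-restrictU l (pderiv 2 (pderiv 0 f) + pderiv 0 (pderiv 2 f)) * restrictU l (pderiv 0 f)
    + restrictU l (pderiv 0 (pderiv 0 f)) * (Polynomial.derivative (restrictU l f)
      - 2 * Polynomial.C l.slope * restrictU l (pderiv 0 f)), ?_⟩
  simp only [flecnode, derivative_restrictU, Polynomial.derivative_C_mul, map_add, map_sub, map_mul]
  ring

theorem restrictU_flecnode_eq_zero {l : SliceLine K} {f : MvPolynomial (Fin 3) K}
    (h : restrictU l f = 0) : restrictU l (flecnode f) = 0 := by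
  obtain ⟨s, hs⟩ := exists_restrictU_flecnode_eq l f
  simp [hs, h]

theorem restrictU_eq_zero_of_tangent {p : ℕ} [CharP K p] {f : MvPolynomial (Fin 3) K}
    (hflec : f ∣ flecnode f) (hdeg : f.totalDegree < p) {l : SliceLine K} {t : K}
    (hroot : (restrictU l f).IsRoot t) (htan : (Polynomial.derivative (restrictU l f)).IsRoot t)
    (hsmooth : ¬ (restrictU l (pderiv 0 f)).IsRoot t) : restrictU l f = 0 := by
  obtain ⟨q, hq⟩ := hflec
  obtain ⟨s, hs⟩ := exists_restrictU_flecnode_eq l f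
  rw [hq, map_mul] at hs
  refine eq_zero_of_mul_derivative_derivative_eq (p := p) (a := restrictU l (pderiv 0 f) ^ 2)
    (b := restrictU l q) (c := -s) (by linear_combination -hs) ?_ hroot htan
    ((natDegree_restrictU_le l f).trans_lt hdeg)
  rwa [Polynomial.IsRoot, Polynomial.eval_pow, pow_eq_zero_iff two_ne_zero]

end Flecnode

section Regulus

variable {K : Type*} [Field K]

/-- The `V`-line `m` belongs to the regulus `{y = (α v + β) u + (γ v + δ)}`, a family of pairwise
disjoint lines on a bilinear surface. -/
def InRegulus (α β γ δ : K) (m : SliceLine K) : Prop :=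
  m.slope = α * m.pos + β ∧ m.icpt = γ * m.pos + δ

/-- A univariate polynomial viewed as a polynomial in the coordinate `u`. -/
noncomputable def ofU : Polynomial K →ₐ[K] MvPolynomial (Fin 3) K :=
  Polynomial.aeval (X 1)

/-- The equation of the bilinear surface carrying the regulus `InRegulus α β γ δ`. -/
noncomputable def bilinear (α β γ δ : K) : MvPolynomial (Fin 3) K :=
  X 0 - ((C α * X 2 + C β) * X 1 + (C γ * X 2 + C δ))

theorem inRegulus_of_restrictV_bilinear_eq_zero {α β γ δ : K} {m : SliceLine K}
    (h : restrictV m (bilinear α β γ δ) = 0) : InRegulus α β γ δ m := by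
  simp only [bilinear, map_add, map_mul, map_sub, restrictV_X, restrictV_C, Matrix.cons_val] at h
  have h₀ := congrArg (Polynomial.eval 0) h
  have h₁ := congrArg (Polynomial.eval 1) h
  simp only [Polynomial.eval_sub, Polynomial.eval_add, Polynomial.eval_mul, Polynomial.eval_C,
    Polynomial.eval_X, Polynomial.eval_zero] at h₀ h₁
  exact ⟨by linear_combination h₁ - h₀, by linear_combination h₀⟩

theorem restrictV_ofU (m : SliceLine K) (q : Polynomial K) : restrictV m (ofU q) = q := by
  rw [ofU, ← Polynomial.aeval_algHom_apply]
  simp [restrictV, restrictU, swapUV]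

theorem restrictU_ofU (l : SliceLine K) (q : Polynomial K) :
    restrictU l (ofU q) = Polynomial.C (q.eval l.pos) := by
  rw [ofU, ← Polynomial.aeval_algHom_apply]
  simp [restrictU, Polynomial.aeval_def, Polynomial.eval₂_at_apply]

theorem degreeOf_zero_ofU (q : Polynomial K) : (ofU q).degreeOf 0 = 0 := by
  have hC : finSuccEquiv K 2 (ofU q) = Polynomial.C (Polynomial.aeval (X 0) q) := by
    rw [ofU, ← Polynomial.aeval_algHom_apply, ← Fin.succ_zero_eq_one, finSuccEquiv_X_succ]
    exact Polynomial.aeval_algebraMap_apply _ _ q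
  rw [← natDegree_finSuccEquiv, hC, Polynomial.natDegree_C]

theorem not_dvd_of_degreeOf_zero_lt {n : ℕ} {f g : MvPolynomial (Fin (n + 1)) K} (hg : g ≠ 0)
    (h : g.degreeOf 0 < f.degreeOf 0) : ¬ f ∣ g := by
  intro hfg
  have hdeg := Polynomial.natDegree_le_of_dvd (map_dvd (finSuccEquiv K n) hfg) (by simpa using hg)
  rw [natDegree_finSuccEquiv, natDegree_finSuccEquiv] at hdeg
  omega

/-- An equation of the surface swept out, as `u` varies, by the tangents to `f = 0` in the slices
of constant `u` at the points of the `V`-line `m`. -/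
noncomputable def tangentSurface (f : MvPolynomial (Fin 3) K) (m : SliceLine K) :
    MvPolynomial (Fin 3) K :=
  ofU (restrictV m (pderiv 0 f)) * (X 0 - (C m.slope * X 1 + C m.icpt))
    + ofU (restrictV m (pderiv 2 f)) * (X 2 - C m.pos)

/-- The tangent to the surface `f = 0` in the slice of constant `u`, at the point of the
`V`-line `m` with this value of `u`; a junk line where `∂f/∂y` vanishes. -/
noncomputable def tangentLine (f : MvPolynomial (Fin 3) K) (m : SliceLine K) (u : K) :
    SliceLine K where
  pos := u
  slope := -((restrictV m (pderiv 2 f)).eval u / (restrictV m (pderiv 0 f)).eval u)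
  icpt := m.slope * u + m.icpt
    + (restrictV m (pderiv 2 f)).eval u / (restrictV m (pderiv 0 f)).eval u * m.pos

theorem meets_tangentLine (f : MvPolynomial (Fin 3) K) (m : SliceLine K) (u : K) :
    Meets (tangentLine f m u) m := by
  simp only [Meets, tangentLine]
  ring

theorem restrictU_tangentLine_eq_zero {p : ℕ} [CharP K p] {f : MvPolynomial (Fin 3) K}
    (hflec : f ∣ flecnode f) (hdeg : f.totalDegree < p) {m : SliceLine K}
    (hm : restrictV m f = 0) {u : K} (hu : (restrictV m (pderiv 0 f)).eval u ≠ 0) :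
    restrictU (tangentLine f m u) f = 0 := by
  have heval := (meets_tangentLine f m u).eval_restrict_eq
  refine restrictU_eq_zero_of_tangent (p := p) hflec hdeg (t := m.pos) ?_ ?_ ?_
  · rw [Polynomial.IsRoot, heval, hm, Polynomial.eval_zero]
  · rw [Polynomial.IsRoot, derivative_restrictU, Polynomial.eval_add, Polynomial.eval_mul,
      Polynomial.eval_C, heval, heval]
    simp only [tangentLine]
    field_simp
    ring
  · rwa [Polynomial.IsRoot, heval]

theorem restrictU_tangentLine_tangentSurface {f : MvPolynomial (Fin 3) K} {m : SliceLine K} {u : K}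
    (hu : (restrictV m (pderiv 0 f)).eval u ≠ 0) :
    restrictU (tangentLine f m u) (tangentSurface f m) = 0 := by
  set q := (restrictV m (pderiv 0 f)).eval u with hq
  set r := (restrictV m (pderiv 2 f)).eval u with hr
  have hslope : q * (tangentLine f m u).slope = -r := by
    simp only [tangentLine, ← hq, ← hr]
    field_simp
  have hicpt : q * (tangentLine f m u).icpt = q * (m.slope * u + m.icpt) + r * m.pos := by
    simp only [tangentLine, ← hq, ← hr]
    field_simp
  have hslope' := congrArg Polynomial.C hslope
  have hicpt' := congrArg Polynomial.C hicpt
  have hpos : (tangentLine f m u).pos = u := rfl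
  simp only [map_add, map_mul, map_neg] at hslope' hicpt'
  simp only [tangentSurface, map_add, map_mul, map_sub, restrictU_ofU, restrictU_X, restrictU_C,
    hpos, ← hq, ← hr, Matrix.cons_val]
  linear_combination Polynomial.X * hslope' + hicpt'

theorem dvd_tangentSurface [Infinite K] {p : ℕ} [CharP K p] {f : MvPolynomial (Fin 3) K}
    (hf : Irreducible f) (hY : f.degreeOf 0 ≠ 0) (hflec : f ∣ flecnode f)
    (hdeg : f.totalDegree < p) {m : SliceLine K} (hm : restrictV m f = 0)
    (hsmooth : restrictV m (pderiv 0 f) ≠ 0) : f ∣ tangentSurface f m := by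
  classical
  by_contra hndvd
  obtain ⟨r, a, b, hr, -, hab⟩ := exists_elimination hf hY hndvd
  obtain ⟨t, ht, htcard⟩ : ∃ t : Finset K,
      (∀ u ∈ t, (restrictV m (pderiv 0 f)).eval u ≠ 0) ∧ t.card = r.totalDegree + 1 := by
    obtain ⟨t, ht, htcard⟩ := (restrictV m (pderiv 0 f)).roots.toFinset.finite_toSet
      |>.infinite_compl.exists_subset_card_eq (r.totalDegree + 1)
    exact ⟨t, fun u hu ↦ by simpa [hsmooth] using ht hu, htcard⟩
  have hpos : Function.LeftInverse SliceLine.pos (tangentLine f m) := fun _ ↦ rfl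
  have hcard := card_le_of_restrictU_rename_succ_eq_zero (R := t.image (tangentLine f m))
    (by
      rw [Finset.coe_image]
      exact (hpos.leftInvOn (t : Set K)).rightInvOn_image.injOn) hr (by
      simp only [Finset.forall_mem_image]
      intro u hu
      rw [← hab, map_add, map_mul, map_mul,
        restrictU_tangentLine_eq_zero (p := p) hflec hdeg hm (ht u hu),
        restrictU_tangentLine_tangentSurface (ht u hu), zero_mul, zero_mul, add_zero])
  rw [Finset.card_image_of_injective _ hpos.injective, htcard] at hcard
  omega

theorem exists_tangentSurface_eq {f : MvPolynomial (Fin 3) K} {m₁ m₂ : SliceLine K}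
    (hpos : m₁.pos ≠ m₂.pos) (hm₂ : restrictV m₂ (tangentSurface f m₁) = 0) :
    ∃ α β γ δ : K, tangentSurface f m₁ =
      ofU (restrictV m₁ (pderiv 0 f)) * bilinear α β γ δ := by
  set q := restrictV m₁ (pderiv 0 f) with hq
  set r := restrictV m₁ (pderiv 2 f) with hr
  obtain ⟨κ, hκ⟩ : ∃ κ, m₂.slope = m₁.slope + κ * (m₂.pos - m₁.pos) :=
    ⟨(m₂.slope - m₁.slope) / (m₂.pos - m₁.pos), by grind⟩
  obtain ⟨σ, hσ⟩ : ∃ σ, m₂.icpt = m₁.icpt + σ * (m₂.pos - m₁.pos) :=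
    ⟨(m₂.icpt - m₁.icpt) / (m₂.pos - m₁.pos), by grind⟩
  have hr_eq : r = -q * (Polynomial.C κ * Polynomial.X + Polynomial.C σ) := by
    have hne : (Polynomial.C (m₂.pos - m₁.pos) : Polynomial K) ≠ 0 :=
      Polynomial.C_ne_zero.mpr (sub_ne_zero.mpr hpos.symm)
    refine mul_right_cancel₀ hne ?_
    simp only [tangentSurface, map_add, map_mul, map_sub, restrictV_ofU, restrictV_X, restrictV_C,
      ← hq, ← hr, hκ, hσ, Matrix.cons_val] at hm₂ ⊢
    linear_combination hm₂
  refine ⟨κ, m₁.slope - κ * m₁.pos, σ, m₁.icpt - σ * m₁.pos, ?_⟩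
  have hofU_C (a : K) : ofU (Polynomial.C a) = C a := Polynomial.aeval_C _ _
  have hofU_X : ofU (Polynomial.X : Polynomial K) = X 1 := Polynomial.aeval_X _
  simp only [tangentSurface, bilinear, ← hq, ← hr, hr_eq, map_add, map_mul, map_sub, map_neg,
    hofU_C, hofU_X]
  ring

theorem exists_forall_inRegulus [Infinite K] {p : ℕ} [CharP K p] {f : MvPolynomial (Fin 3) K}
    (hf : Irreducible f) (hY : f.degreeOf 0 ≠ 0) (hflec : f ∣ flecnode f)
    (hdeg : f.totalDegree < p) {m₁ m₂ : SliceLine K} (hm₁ : restrictV m₁ f = 0)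
    (hm₂ : restrictV m₂ f = 0) (hpos : m₁.pos ≠ m₂.pos)
    (hsmooth : restrictV m₁ (pderiv 0 f) ≠ 0) :
    ∃ α β γ δ : K, ∀ m, restrictV m f = 0 → InRegulus α β γ δ m := by
  have htan := dvd_tangentSurface hf hY hflec hdeg hm₁ hsmooth
  obtain ⟨α, β, γ, δ, heq⟩ := exists_tangentSurface_eq hpos (zero_dvd_iff.mp
    (hm₂ ▸ map_dvd (restrictV m₂) htan))
  have hofU : ofU (restrictV m₁ (pderiv 0 f)) ≠ 0 := fun h ↦
    hsmooth (by rw [← restrictV_ofU m₁ (restrictV m₁ (pderiv 0 f)), h, map_zero])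
  have hdvd : f ∣ bilinear α β γ δ := (hf.prime.dvd_or_dvd (heq ▸ htan)).resolve_left
    (not_dvd_of_degreeOf_zero_lt hofU (by rw [degreeOf_zero_ofU]; omega))
  exact ⟨α, β, γ, δ, fun m hm ↦ inRegulus_of_restrictV_bilinear_eq_zero
    (zero_dvd_iff.mp (hm ▸ map_dvd (restrictV m) hdvd))⟩

end Regulus

section Incidences

/-- Every regulus contains at most `k` of the `V`-lines in `M`. -/
def RegulusBound {K : Type*} [Field K] (k : ℕ) (M : Finset (SliceLine K)) : Prop :=
  ∀ α β γ δ : K, ∀ G ⊆ M, (∀ m ∈ G, InRegulus α β γ δ m) → G.card ≤ k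

theorem RegulusBound.mono {K : Type*} [Field K] {k : ℕ} {G M : Finset (SliceLine K)}
    (h : RegulusBound k M) (hG : G ⊆ M) : RegulusBound k G :=
  fun α β γ δ G' hG' ↦ h α β γ δ G' (hG'.trans hG)

variable {K : Type*} [Field K] [DecidableEq K] {L M : Finset (SliceLine K)}

/-- The number of incidences between `L` and `M`, i.e. of pairs of a `U`-line of `L` and a `V`-line
of `M` that meet. -/
def incidences (L M : Finset (SliceLine K)) : ℕ :=
  (Rel.interedges Meets L M).card

theorem incidences_comm (L M : Finset (SliceLine K)) : incidences L M = incidences M L :=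
  Rel.card_interedges_comm L M

theorem incidences_le_mul (L M : Finset (SliceLine K)) : incidences L M ≤ L.card * M.card :=
  Rel.card_interedges_le_mul Meets L M

theorem incidences_eq_sum (L M : Finset (SliceLine K)) :
    incidences L M = ∑ l ∈ L, (M.filter (Meets l)).card := by
  simp only [incidences, Rel.interedges, Finset.card_filter, Finset.sum_product]

theorem incidences_filter_add_filter_not (P : SliceLine K → Prop) [DecidablePred P]
    (L M : Finset (SliceLine K)) :
    incidences (L.filter P) M + incidences (L.filter fun l ↦ ¬ P l) M = incidences L M := by
  simp only [incidences_eq_sum, Finset.sum_filter_add_sum_filter_not]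

theorem incidences_filter_add_filter_not' (P : SliceLine K → Prop) [DecidablePred P]
    (L M : Finset (SliceLine K)) :
    incidences L (M.filter P) + incidences L (M.filter fun m ↦ ¬ P m) = incidences L M := by
  simp only [incidences_comm L, incidences_filter_add_filter_not]

theorem incidences_le_of_restrictU_ne_zero (hM : Set.InjOn SliceLine.pos (M : Set (SliceLine K)))
    {f : MvPolynomial (Fin 3) K} (hMf : ∀ m ∈ M, restrictV m f = 0)
    (hLf : ∀ l ∈ L, restrictU l f ≠ 0) : incidences L M ≤ L.card * f.totalDegree := by
  rw [incidences_eq_sum]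
  exact Finset.sum_le_card_nsmul _ _ _ fun l hl ↦
    card_filter_meets_le_totalDegree hM hMf (hLf l hl)

theorem incidences_le_of_restrictV_ne_zero (hL : Set.InjOn SliceLine.pos (L : Set (SliceLine K)))
    {f : MvPolynomial (Fin 3) K} (hLf : ∀ l ∈ L, restrictU l f = 0)
    (hMf : ∀ m ∈ M, restrictV m f ≠ 0) : incidences L M ≤ M.card * f.totalDegree := by
  rw [incidences_comm, incidences_eq_sum]
  exact Finset.sum_le_card_nsmul _ _ _ fun m hm ↦
    card_filter_meets_le_totalDegree' hL hLf (hMf m hm)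

/-- Subfamilies `R` of `L` and `G` of `M` of size at most `n` have at most `B + k * |R|`
incidences. -/
def SubfamilyBound (n B k : ℕ) (L M : Finset (SliceLine K)) : Prop :=
  ∀ R ⊆ L, ∀ G ⊆ M, R.card ≤ n → G.card ≤ n → incidences R G ≤ B + k * R.card

theorem SubfamilyBound.mono {n B k : ℕ} {R G : Finset (SliceLine K)} (h : SubfamilyBound n B k L M)
    (hR : R ⊆ L) (hG : G ⊆ M) : SubfamilyBound n B k R G :=
  fun R' hR' G' hG' ↦ h R' (hR'.trans hR) G' (hG'.trans hG)

end Incidences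

section Irreducible

theorem pderiv_ne_zero {R σ : Type*} [CommSemiring R] [NoZeroDivisors R] {p : ℕ} [CharP R p]
    {i : σ} {f : MvPolynomial σ R} (hi : f.degreeOf i ≠ 0) (hp : f.degreeOf i < p) :
    pderiv i f ≠ 0 := by
  classical
  obtain ⟨m, hm, hmi⟩ : ∃ m ∈ f.support, m i = f.degreeOf i := by
    have hf : f.support.Nonempty := support_nonempty.mpr fun h ↦ hi (by rw [h, degreeOf_zero])
    obtain ⟨m, hm, hmax⟩ := f.support.exists_mem_eq_sup hf fun m ↦ m i
    exact ⟨m, hm, by rw [degreeOf_eq_sup, hmax]⟩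
  have hm' : m - Finsupp.single i 1 + Finsupp.single i 1 = m :=
    tsub_add_cancel_of_le (Finsupp.single_le_iff.mpr (by omega))
  have hcast : (((m - Finsupp.single i 1 : σ →₀ ℕ) i : R) + 1) = (f.degreeOf i : ℕ) := by
    rw [← hmi, ← Nat.cast_add_one, Finsupp.tsub_apply, Finsupp.single_eq_same,
      Nat.sub_add_cancel (by omega)]
  refine ne_zero_iff.mpr ⟨m - Finsupp.single i 1, ?_⟩
  rw [coeff_pderiv, hm', hcast]
  refine mul_ne_zero (mem_support_iff.mp hm) fun h ↦ ?_
  exact hi (Nat.eq_zero_of_dvd_of_lt ((CharP.cast_eq_zero_iff R p _).mp h) hp)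

theorem not_dvd_pderiv {R σ : Type*} [CommSemiring R] [NoZeroDivisors R] {p : ℕ} [CharP R p]
    {i : σ} {f : MvPolynomial σ R} (hi : f.degreeOf i ≠ 0) (hp : f.degreeOf i < p) :
    ¬ f ∣ pderiv i f := by
  intro hdvd
  have hle := totalDegree_le_of_dvd_of_isDomain hdvd (pderiv_ne_zero hi hp)
  have hlt := totalDegree_pderiv_le i f
  have hpos := degreeOf_le_totalDegree f i
  omega

theorem exists_rename_succ_of_degreeOf_zero_eq_zero {R : Type*} [CommSemiring R] {n : ℕ}
    {f : MvPolynomial (Fin (n + 1)) R} (h : f.degreeOf 0 = 0) :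
    ∃ r : MvPolynomial (Fin n) R, r.totalDegree ≤ f.totalDegree ∧ rename Fin.succ r = f := by
  refine ⟨(finSuccEquiv R n f).coeff 0, totalDegree_coeff_finSuccEquiv_le f 0,
    (finSuccEquiv R n).injective ?_⟩
  rw [finSuccEquiv_rename_succ, ← Polynomial.eq_C_of_natDegree_eq_zero (by
    rwa [natDegree_finSuccEquiv])]

variable {K : Type*} [Field K] {f g : MvPolynomial (Fin 3) K} {R G : Finset (SliceLine K)}

theorem card_le_totalDegree_of_degreeOf_zero_eq_zero (hf : f ≠ 0) (hY : f.degreeOf 0 = 0)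
    (hR : Set.InjOn SliceLine.pos (R : Set (SliceLine K))) (hRf : ∀ l ∈ R, restrictU l f = 0) :
    R.card ≤ f.totalDegree := by
  obtain ⟨r, hdeg, rfl⟩ := exists_rename_succ_of_degreeOf_zero_eq_zero hY
  exact (card_le_of_restrictU_rename_succ_eq_zero hR (by rintro rfl; simp at hf) hRf).trans hdeg

theorem exists_elimination_of_totalDegree_le (hf : Irreducible f) (hY : f.degreeOf 0 ≠ 0)
    (hfg : ¬ f ∣ g) (hg : g.totalDegree ≤ 3 * f.totalDegree) :
    ∃ (r : MvPolynomial (Fin 2) K) (a b : MvPolynomial (Fin 3) K), r ≠ 0 ∧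
      r.totalDegree ≤ 12 * f.totalDegree ^ 2 ∧ f * a + g * b = rename Fin.succ r := by
  obtain ⟨r, a, b, hr, hdeg, hab⟩ := exists_elimination hf hY hfg
  refine ⟨r, a, b, hr, hdeg.trans ?_, hab⟩
  calc (f.totalDegree + g.totalDegree) * max f.totalDegree g.totalDegree
      ≤ (f.totalDegree + 3 * f.totalDegree) * (3 * f.totalDegree) := by gcongr; omega
    _ = 12 * f.totalDegree ^ 2 := by ring

theorem card_le_of_restrictU_eq_zero (hf : Irreducible f) (hY : f.degreeOf 0 ≠ 0)
    (hfg : ¬ f ∣ g) (hg : g.totalDegree ≤ 3 * f.totalDegree)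
    (hR : Set.InjOn SliceLine.pos (R : Set (SliceLine K))) (hRf : ∀ l ∈ R, restrictU l f = 0)
    (hRg : ∀ l ∈ R, restrictU l g = 0) : R.card ≤ 12 * f.totalDegree ^ 2 := by
  obtain ⟨r, a, b, hr, hdeg, hab⟩ := exists_elimination_of_totalDegree_le hf hY hfg hg
  refine (card_le_of_restrictU_rename_succ_eq_zero hR hr fun l hl ↦ ?_).trans hdeg
  rw [← hab, map_add, map_mul, map_mul, hRf l hl, hRg l hl, zero_mul, zero_mul, add_zero]

theorem card_le_of_restrictV_eq_zero (hf : Irreducible f) (hY : f.degreeOf 0 ≠ 0)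
    (hfg : ¬ f ∣ g) (hg : g.totalDegree ≤ 3 * f.totalDegree)
    (hG : Set.InjOn SliceLine.pos (G : Set (SliceLine K))) (hGf : ∀ m ∈ G, restrictV m f = 0)
    (hGg : ∀ m ∈ G, restrictV m g = 0) : G.card ≤ 12 * f.totalDegree ^ 2 := by
  obtain ⟨r, a, b, hr, hdeg, hab⟩ := exists_elimination_of_totalDegree_le hf hY hfg hg
  refine (card_le_of_restrictV_rename_succ_eq_zero hG hr fun m hm ↦ ?_).trans hdeg
  rw [← hab, map_add, map_mul, map_mul, hGf m hm, hGg m hm, zero_mul, zero_mul, add_zero]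

theorem card_le_of_dvd_flecnode [Infinite K] {p k : ℕ} [CharP K p] (hf : Irreducible f)
    (hY : f.degreeOf 0 ≠ 0) (hflec : f ∣ flecnode f) (hp : f.totalDegree < p)
    (hG : Set.InjOn SliceLine.pos (G : Set (SliceLine K))) (hGf : ∀ m ∈ G, restrictV m f = 0)
    (hk : RegulusBound k G) {m₁ : SliceLine K} (hm₁ : m₁ ∈ G)
    (hsmooth : restrictV m₁ (pderiv 0 f) ≠ 0) : G.card ≤ k + 1 := by
  by_cases hG₁ : ∀ m ∈ G, m = m₁
  · exact (Finset.card_le_one.mpr fun m hm m' hm' ↦ (hG₁ m hm).trans (hG₁ m' hm').symm).trans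
      (Nat.le_add_left 1 k)
  · push Not at hG₁
    obtain ⟨m₂, hm₂, hne⟩ := hG₁
    obtain ⟨α, β, γ, δ, hreg⟩ := exists_forall_inRegulus hf hY hflec hp (hGf m₁ hm₁) (hGf m₂ hm₂)
      (fun h ↦ hne (hG hm₂ hm₁ h.symm)) hsmooth
    exact (hk α β γ δ G subset_rfl fun m hm ↦ hreg m (hGf m hm)).trans (Nat.le_succ k)

variable [DecidableEq K] {B k : ℕ}

theorem incidences_le_of_singular {p : ℕ} [CharP K p] (hf : Irreducible f)
    (hY : f.degreeOf 0 ≠ 0) (hp : f.totalDegree < p)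
    (hR : Set.InjOn SliceLine.pos (R : Set (SliceLine K)))
    (hG : Set.InjOn SliceLine.pos (G : Set (SliceLine K)))
    (hRf : ∀ l ∈ R, restrictU l f = 0) (hGf : ∀ m ∈ G, restrictV m f = 0)
    (hsing : ∀ m ∈ G, restrictV m (pderiv 0 f) = 0)
    (hB : SubfamilyBound (12 * f.totalDegree ^ 2) B k R G) :
    incidences R G ≤ f.totalDegree * R.card + (B + k * R.card) := by
  classical
  have hndvd : ¬ f ∣ pderiv 0 f := not_dvd_pderiv hY ((degreeOf_le_totalDegree f 0).trans_lt hp)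
  have hdeg : (pderiv 0 f).totalDegree ≤ f.totalDegree :=
    (totalDegree_pderiv_le 0 f).trans (Nat.sub_le _ _)
  have hdeg₃ : (pderiv 0 f).totalDegree ≤ 3 * f.totalDegree := by omega
  set S := R.filter fun l ↦ restrictU l (pderiv 0 f) = 0
  set T := R.filter fun l ↦ ¬ restrictU l (pderiv 0 f) = 0
  have hSR : S ⊆ R := Finset.filter_subset _ _
  have hSG := hB S hSR G subset_rfl
    (card_le_of_restrictU_eq_zero hf hY hndvd hdeg₃ (hR.mono (Finset.coe_subset.mpr hSR))
      (fun l hl ↦ hRf l (hSR hl)) fun l hl ↦ (Finset.mem_filter.mp hl).2)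
    (card_le_of_restrictV_eq_zero hf hY hndvd hdeg₃ hG hGf hsing)
  have hTG := incidences_le_of_restrictU_ne_zero (L := T) hG hsing
    fun l hl ↦ (Finset.mem_filter.mp hl).2
  calc incidences R G = incidences T G + incidences S G := by
        rw [add_comm, incidences_filter_add_filter_not]
    _ ≤ T.card * (pderiv 0 f).totalDegree + (B + k * S.card) := add_le_add hTG hSG
    _ ≤ R.card * f.totalDegree + (B + k * R.card) := by
        gcongr
        exact Finset.filter_subset _ _
    _ = f.totalDegree * R.card + (B + k * R.card) := by ring

theorem incidences_le_of_not_dvd_flecnode (hf : Irreducible f) (hY : f.degreeOf 0 ≠ 0)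
    (hflec : ¬ f ∣ flecnode f) (hR : Set.InjOn SliceLine.pos (R : Set (SliceLine K)))
    (hG : Set.InjOn SliceLine.pos (G : Set (SliceLine K)))
    (hRf : ∀ l ∈ R, restrictU l f = 0) (hGf : ∀ m ∈ G, restrictV m f = 0)
    (hB : SubfamilyBound (12 * f.totalDegree ^ 2) B k R G) :
    incidences R G ≤ 3 * f.totalDegree * G.card + (B + k * R.card) := by
  classical
  have hdeg := totalDegree_flecnode_le f
  have hRflec (l) (hl : l ∈ R) : restrictU l (flecnode f) = 0 :=
    restrictU_flecnode_eq_zero (hRf l hl)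
  set S := G.filter fun m ↦ restrictV m (flecnode f) = 0
  set T := G.filter fun m ↦ ¬ restrictV m (flecnode f) = 0
  have hSG : S ⊆ G := Finset.filter_subset _ _
  have hRS := hB R subset_rfl S hSG
    (card_le_of_restrictU_eq_zero hf hY hflec hdeg hR hRf hRflec)
    (card_le_of_restrictV_eq_zero hf hY hflec hdeg (hG.mono (Finset.coe_subset.mpr hSG))
      (fun m hm ↦ hGf m (hSG hm)) fun m hm ↦ (Finset.mem_filter.mp hm).2)
  have hRT := incidences_le_of_restrictV_ne_zero (M := T) hR hRflec
    fun m hm ↦ (Finset.mem_filter.mp hm).2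
  calc incidences R G = incidences R T + incidences R S := by
        rw [add_comm, incidences_filter_add_filter_not']
    _ ≤ T.card * (flecnode f).totalDegree + (B + k * R.card) := add_le_add hRT hRS
    _ ≤ G.card * (3 * f.totalDegree) + (B + k * R.card) := by
        gcongr
        exact Finset.filter_subset _ _
    _ = 3 * f.totalDegree * G.card + (B + k * R.card) := by ring

theorem incidences_le_of_irreducible [Infinite K] {p : ℕ} [CharP K p] (hf : Irreducible f)
    (hp : f.totalDegree < p) (hR : Set.InjOn SliceLine.pos (R : Set (SliceLine K)))
    (hG : Set.InjOn SliceLine.pos (G : Set (SliceLine K)))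
    (hRf : ∀ l ∈ R, restrictU l f = 0) (hGf : ∀ m ∈ G, restrictV m f = 0)
    (hk : RegulusBound k G) (hB : SubfamilyBound (12 * f.totalDegree ^ 2) B k R G) :
    incidences R G ≤ 3 * f.totalDegree * (R.card + G.card) + (B + k * R.card) := by
  by_cases hY : f.degreeOf 0 = 0
  · calc incidences R G ≤ R.card * G.card := incidences_le_mul R G
      _ ≤ f.totalDegree * G.card := by
        gcongr
        exact card_le_totalDegree_of_degreeOf_zero_eq_zero hf.ne_zero hY hR hRf
      _ ≤ _ := by nlinarith
  by_cases hflec : f ∣ flecnode f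
  · by_cases hsing : ∀ m ∈ G, restrictV m (pderiv 0 f) = 0
    · have h := incidences_le_of_singular hf hY hp hR hG hRf hGf hsing hB
      nlinarith
    · push Not at hsing
      obtain ⟨m₁, hm₁, hsmooth⟩ := hsing
      have hdeg : 1 ≤ f.totalDegree :=
        (Nat.one_le_iff_ne_zero.mpr hY).trans (degreeOf_le_totalDegree f 0)
      calc incidences R G ≤ R.card * G.card := incidences_le_mul R G
        _ ≤ R.card * (k + 1) := by
          gcongr
          exact card_le_of_dvd_flecnode hf hY hflec hp hG hGf hk hm₁ hsmooth
        _ ≤ _ := by nlinarith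
  · have h := incidences_le_of_not_dvd_flecnode hf hY hflec hR hG hRf hGf hB
    nlinarith

end Irreducible

section Interpolation

theorem totalDegree_le_of_mem_restrictDegree {R σ : Type*} [CommSemiring R] [Fintype σ] {n : ℕ}
    {f : MvPolynomial σ R} (hf : f ∈ restrictDegree σ R n) :
    f.totalDegree ≤ Fintype.card σ * n := by
  rw [totalDegree, Finset.sup_le_iff]
  intro m hm
  rw [Finsupp.sum_fintype _ _ fun _ ↦ rfl]
  exact Finset.sum_le_card_nsmul _ _ _ fun i _ ↦ (mem_restrictDegree _ _ _).mp hf m hm i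

theorem finrank_restrictDegree {R σ : Type*} [CommRing R] [Nontrivial R] [Fintype σ] (n : ℕ) :
    Module.finrank R (restrictDegree σ R n) = (n + 1) ^ Fintype.card σ := by
  let e : {m : σ →₀ ℕ | ∀ i, m i ≤ n} ≃ (σ → Set.Iic n) :=
    (Finsupp.equivFunOnFinite.subtypeEquiv (q := fun g ↦ ∀ i, g i ∈ Set.Iic n)
      fun _ ↦ Iff.rfl).trans Equiv.subtypePiEquivPi
  rw [restrictDegree, Module.finrank_eq_nat_card_basis (basisRestrictSupport R _), Nat.card_congr e,
    Nat.card_fun, Nat.card_eq_fintype_card, Nat.card_eq_fintype_card]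
  simp

variable {K : Type*} [Field K]

theorem exists_forall_restrictU_eq_zero {R : Finset (SliceLine K)} {n : ℕ}
    (hn : 3 * R.card < (n + 1) ^ 2) :
    ∃ f : MvPolynomial (Fin 3) K, f ≠ 0 ∧ f.totalDegree ≤ 3 * n ∧ ∀ l ∈ R, restrictU l f = 0 := by
  let coeffs : restrictDegree (Fin 3) K n →ₗ[K] (R × Fin (3 * n + 1) → K) :=
    LinearMap.pi fun q ↦ Polynomial.lcoeff K q.2 ∘ₗ (restrictU q.1.1).toLinearMap ∘ₗ
      Submodule.subtype _
  have hlt : Module.finrank K (R × Fin (3 * n + 1) → K) <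
      Module.finrank K (restrictDegree (Fin 3) K n) := by
    simp only [finrank_restrictDegree, Module.finrank_fintype_fun_eq_card, Fintype.card_prod,
      Fintype.card_fin, Fintype.card_coe]
    nlinarith
  obtain ⟨⟨f, hfn⟩, hf, hf₀⟩ :=
    (Submodule.ne_bot_iff _).mp (LinearMap.ker_ne_bot_of_finrank_lt (f := coeffs) hlt)
  have hdeg : f.totalDegree ≤ 3 * n := by
    simpa using totalDegree_le_of_mem_restrictDegree hfn
  refine ⟨f, by simpa using hf₀, hdeg, fun l hl ↦ Polynomial.ext fun j ↦ ?_⟩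
  rw [Polynomial.coeff_zero]
  rcases lt_or_ge j (3 * n + 1) with hj | hj
  · exact congrFun (LinearMap.mem_ker.mp hf) (⟨l, hl⟩, ⟨j, hj⟩)
  · exact Polynomial.coeff_eq_zero_of_natDegree_lt
      (((natDegree_restrictU_le l f).trans hdeg).trans_lt hj)

end Interpolation

section IncidenceBound

variable {K : Type*} [Field K] [DecidableEq K] {L M R G : Finset (SliceLine K)} {k : ℕ}

theorem incidences_le_add_filter_restrict_eq_zero
    (hR : Set.InjOn SliceLine.pos (R : Set (SliceLine K)))
    (hG : Set.InjOn SliceLine.pos (G : Set (SliceLine K))) (g : MvPolynomial (Fin 3) K)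
    [DecidablePred fun l ↦ restrictU l g = 0] [DecidablePred fun m ↦ restrictV m g = 0] :
    incidences R G ≤
      incidences (R.filter fun l ↦ restrictU l g = 0) (G.filter fun m ↦ restrictV m g = 0)
      + incidences (R.filter fun l ↦ ¬ restrictU l g = 0) (G.filter fun m ↦ ¬ restrictV m g = 0)
      + g.totalDegree * ((R.filter fun l ↦ ¬ restrictU l g = 0).card
        + (G.filter fun m ↦ ¬ restrictV m g = 0).card) := by
  set R₀ := R.filter fun l ↦ restrictU l g = 0
  set R₁ := R.filter fun l ↦ ¬ restrictU l g = 0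
  set G₀ := G.filter fun m ↦ restrictV m g = 0
  set G₁ := G.filter fun m ↦ ¬ restrictV m g = 0
  have hR₀ : incidences R₀ G = incidences R₀ G₀ + incidences R₀ G₁ :=
    (incidences_filter_add_filter_not' _ _ _).symm
  have hR₁ : incidences R₁ G = incidences R₁ G₀ + incidences R₁ G₁ :=
    (incidences_filter_add_filter_not' _ _ _).symm
  have hR₀G₁ : incidences R₀ G₁ ≤ G₁.card * g.totalDegree :=
    incidences_le_of_restrictV_ne_zero
      (hR.mono (Finset.coe_subset.mpr (Finset.filter_subset _ _)))
      (fun l hl ↦ (Finset.mem_filter.mp hl).2) fun m hm ↦ (Finset.mem_filter.mp hm).2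
  have hR₁G₀ : incidences R₁ G₀ ≤ R₁.card * g.totalDegree :=
    incidences_le_of_restrictU_ne_zero
      (hG.mono (Finset.coe_subset.mpr (Finset.filter_subset _ _)))
      (fun m hm ↦ (Finset.mem_filter.mp hm).2) fun l hl ↦ (Finset.mem_filter.mp hl).2
  rw [← incidences_filter_add_filter_not (fun l ↦ restrictU l g = 0) R G]
  linarith

theorem incidences_le_of_irreducible_mul [Infinite K] {p : ℕ} [CharP K p] {B W a : ℕ}
    {f g : MvPolynomial (Fin 3) K} (hf : Irreducible f) (hp : f.totalDegree < p)
    (hR : Set.InjOn SliceLine.pos (R : Set (SliceLine K)))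
    (hG : Set.InjOn SliceLine.pos (G : Set (SliceLine K)))
    (hRfg : ∀ l ∈ R, restrictU l (f * g) = 0) (hGfg : ∀ m ∈ G, restrictV m (f * g) = 0)
    (hk : RegulusBound k G) (hB : SubfamilyBound (12 * f.totalDegree ^ 2) B k R G)
    (hg : ∀ R' ⊆ R, ∀ G' ⊆ G, (∀ l ∈ R', restrictU l g = 0) → (∀ m ∈ G', restrictV m g = 0) →
      incidences R' G' ≤ 3 * a * (R'.card + G'.card) + (W + k * R'.card)) :
    incidences R G ≤
      3 * (f.totalDegree + a) * (R.card + G.card) + (B + W + k * R.card) := by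
  classical
  have hsplit := incidences_le_add_filter_restrict_eq_zero hR hG f
  have hRcard := Finset.card_filter_add_card_filter_not (s := R) fun l ↦ restrictU l f = 0
  have hGcard := Finset.card_filter_add_card_filter_not (s := G) fun m ↦ restrictV m f = 0
  have hR₀ : (R.filter fun l ↦ restrictU l f = 0) ⊆ R := Finset.filter_subset _ _
  have hG₀ : (G.filter fun m ↦ restrictV m f = 0) ⊆ G := Finset.filter_subset _ _
  have hon := incidences_le_of_irreducible (p := p) hf hp
    (hR.mono (Finset.coe_subset.mpr hR₀)) (hG.mono (Finset.coe_subset.mpr hG₀))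
    (fun l hl ↦ (Finset.mem_filter.mp hl).2) (fun m hm ↦ (Finset.mem_filter.mp hm).2)
    (hk.mono hG₀) (hB.mono hR₀ hG₀)
  have hoff := hg (R.filter fun l ↦ ¬ restrictU l f = 0) (Finset.filter_subset _ _)
    (G.filter fun m ↦ ¬ restrictV m f = 0) (Finset.filter_subset _ _)
    (fun l hl ↦ by
      obtain ⟨hlR, hlf⟩ := Finset.mem_filter.mp hl
      exact (mul_eq_zero.mp ((map_mul _ f g).symm.trans (hRfg l hlR))).resolve_left hlf)
    (fun m hm ↦ by
      obtain ⟨hmG, hmf⟩ := Finset.mem_filter.mp hm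
      exact (mul_eq_zero.mp ((map_mul _ f g).symm.trans (hGfg m hmG))).resolve_left hmf)
  rw [← hRcard, ← hGcard]
  nlinarith

theorem incidences_le_of_forall_restrict_eq_zero [Infinite K] {p : ℕ} [CharP K p] {c : ℕ}
    {f : MvPolynomial (Fin 3) K} (hf : f ≠ 0) (hp : f.totalDegree < p)
    (hR : Set.InjOn SliceLine.pos (R : Set (SliceLine K)))
    (hG : Set.InjOn SliceLine.pos (G : Set (SliceLine K)))
    (hRf : ∀ l ∈ R, restrictU l f = 0) (hGf : ∀ m ∈ G, restrictV m f = 0)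
    (hk : RegulusBound k G)
    (hB : ∀ d ≤ f.totalDegree, SubfamilyBound (12 * d ^ 2) (c * d ^ 3) k R G) :
    incidences R G ≤
      3 * f.totalDegree * (R.card + G.card) + (c * f.totalDegree ^ 3 + k * R.card) := by
  induction f using WfDvdMonoid.induction_on_irreducible generalizing R G with
  | zero => exact absurd rfl hf
  | unit u hu =>
    have hR₀ : R = ∅ := Finset.eq_empty_of_forall_notMem fun l hl ↦
      not_isUnit_zero (hRf l hl ▸ hu.map (restrictU l))
    simp [hR₀, incidences_eq_sum]
  | mul g q hg hq ih =>
    rw [totalDegree_mul_of_isDomain hq.ne_zero hg] at hp hB ⊢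
    have hmul := incidences_le_of_irreducible_mul (p := p) hq (by omega) hR hG hRf hGf hk
      (hB _ (Nat.le_add_right _ _)) fun R' hR' G' hG' hR'g hG'g ↦
        ih hg (by omega) (hR.mono (Finset.coe_subset.mpr hR'))
          (hG.mono (Finset.coe_subset.mpr hG')) hR'g hG'g (hk.mono hG')
          fun d hd ↦ (hB d (by omega)).mono hR' hG'
    have hcube : q.totalDegree ^ 3 + g.totalDegree ^ 3 ≤ (q.totalDegree + g.totalDegree) ^ 3 :=
      pow_add_pow_le (Nat.zero_le _) (Nat.zero_le _) three_ne_zero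
    refine hmul.trans ?_
    rw [← mul_add]
    gcongr

theorem incidences_le_of_sqrt_le [Infinite K] {p : ℕ} [CharP K p] {c D : ℕ} (hp : D < p)
    (hD : 3 * Nat.sqrt (3 * R.card) ≤ D) (hR : Set.InjOn SliceLine.pos (R : Set (SliceLine K)))
    (hM : Set.InjOn SliceLine.pos (M : Set (SliceLine K))) (hk : RegulusBound k M)
    (hB : ∀ d ≤ D, SubfamilyBound (12 * d ^ 2) (c * d ^ 3) k R M) :
    incidences R M ≤ D * (3 * R.card + 4 * M.card) + (c * D ^ 3 + k * R.card) := by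
  classical
  obtain ⟨f, hf, hdeg, hRf⟩ := exists_forall_restrictU_eq_zero (Nat.lt_succ_sqrt' (3 * R.card))
  replace hdeg := hdeg.trans hD
  set G := M.filter fun m ↦ restrictV m f = 0
  have hGM : G ⊆ M := Finset.filter_subset _ _
  have hG := incidences_le_of_forall_restrict_eq_zero (p := p) hf (hdeg.trans_lt hp) hR
    (hM.mono (Finset.coe_subset.mpr hGM)) hRf (fun m hm ↦ (Finset.mem_filter.mp hm).2)
    (hk.mono hGM) fun d hd ↦ (hB d (hd.trans hdeg)).mono subset_rfl hGM
  have hT := incidences_le_of_restrictV_ne_zero (M := M.filter fun m ↦ ¬ restrictV m f = 0) hR hRf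
    fun m hm ↦ (Finset.mem_filter.mp hm).2
  calc incidences R M
      = incidences R G + incidences R (M.filter fun m ↦ ¬ restrictV m f = 0) :=
        (incidences_filter_add_filter_not' _ _ _).symm
    _ ≤ 3 * f.totalDegree * (R.card + G.card) + (c * f.totalDegree ^ 3 + k * R.card)
        + (M.filter fun m ↦ ¬ restrictV m f = 0).card * f.totalDegree := add_le_add hG hT
    _ ≤ 3 * D * (R.card + M.card) + (c * D ^ 3 + k * R.card) + M.card * D := by
        gcongr
        exact Finset.filter_subset _ _
    _ = D * (3 * R.card + 4 * M.card) + (c * D ^ 3 + k * R.card) := by ring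

theorem incidences_le_mul_of_forall_card_le {n W : ℕ}
    (h : ∀ R ⊆ L, R.card ≤ n → incidences R M ≤ W + k * R.card) {t : ℕ} (hL : L.card ≤ t * n) :
    incidences L M ≤ t * W + k * L.card := by
  classical
  induction t generalizing L with
  | zero =>
    have hL₀ : L = ∅ := by simpa using hL
    simp [hL₀, incidences_eq_sum]
  | succ t ih =>
    obtain ⟨R, hRL, hR⟩ := Finset.exists_subset_card_eq (min_le_right n L.card)
    have hcard := Finset.card_sdiff_add_card_eq_card hRL
    have hrest := ih (L := L \ R) (fun R' hR' ↦ h R' (hR'.trans Finset.sdiff_subset)) (by grind)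
    have hblock := h R hRL (by omega)
    have hsplit := incidences_filter_add_filter_not (· ∈ R) L M
    rw [Finset.filter_mem_eq_inter, Finset.inter_eq_right.mpr hRL, Finset.filter_notMem_eq_sdiff]
      at hsplit
    rw [← hsplit, ← hcard]
    linarith

theorem sqrt_twelve_mul_sq_pow_three_le (d : ℕ) :
    √((12 * d ^ 2 : ℕ) : ℝ) ^ 3 ≤ 42 * (d : ℝ) ^ 3 := by
  have hsqrt : √((12 * d ^ 2 : ℕ) : ℝ) ≤ 7 / 2 * d := by
    refine Real.sqrt_le_iff.mpr ⟨by positivity, ?_⟩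
    push_cast
    nlinarith [sq_nonneg (d : ℝ)]
  calc √((12 * d ^ 2 : ℕ) : ℝ) ^ 3
      = √((12 * d ^ 2 : ℕ) : ℝ) ^ 2 * √((12 * d ^ 2 : ℕ) : ℝ) := by ring
    _ ≤ 12 * (d : ℝ) ^ 2 * (7 / 2 * d) := by
      rw [Real.sq_sqrt (Nat.cast_nonneg _)]
      gcongr
      exact (Nat.cast_mul _ _).le.trans (by push_cast; rfl)
    _ = 42 * (d : ℝ) ^ 3 := by ring

theorem incidences_le_of_subfamilyBound [Infinite K] {p N n D c : ℕ} [CharP K p] (hp : D < p)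
    (hD : 3 * Nat.sqrt (3 * n) ≤ D) (hnN : n ≤ N)
    (hLi : Set.InjOn SliceLine.pos (L : Set (SliceLine K)))
    (hMi : Set.InjOn SliceLine.pos (M : Set (SliceLine K))) (hk : RegulusBound k M)
    (hB : ∀ d ≤ D, SubfamilyBound (12 * d ^ 2) (c * d ^ 3) k L M) {t : ℕ}
    (hL : L.card ≤ t * n) (hM : M.card ≤ N) :
    incidences L M ≤ t * (7 * D * N + c * D ^ 3) + k * L.card := by
  refine incidences_le_mul_of_forall_card_le (fun R hR hRn ↦ ?_) hL
  have hsqrt : 3 * Nat.sqrt (3 * R.card) ≤ D := le_trans (by gcongr) hD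
  calc incidences R M ≤ D * (3 * R.card + 4 * M.card) + (c * D ^ 3 + k * R.card) :=
        incidences_le_of_sqrt_le hp hsqrt (hLi.mono (Finset.coe_subset.mpr hR)) hMi hk
          fun d hd ↦ (hB d hd).mono hR subset_rfl
    _ ≤ D * (3 * N + 4 * N) + (c * D ^ 3 + k * R.card) := by
        gcongr
        exact hRn.trans hnN
    _ = 7 * D * N + c * D ^ 3 + k * R.card := by ring

/-- The bound of the incidence theorem for families of at most `N` lines, with the constant
`2 * 10 ^ 7`. -/
def IncidenceTheorem (K : Type*) [Field K] [DecidableEq K] (k N : ℕ) : Prop :=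
  ∀ L M : Finset (SliceLine K), L.card ≤ N → M.card ≤ N →
    Set.InjOn SliceLine.pos (L : Set (SliceLine K)) →
    Set.InjOn SliceLine.pos (M : Set (SliceLine K)) → RegulusBound k M →
    (incidences L M : ℝ) ≤ 2 * 10 ^ 7 * √N ^ 3 + k * L.card

theorem IncidenceTheorem.subfamilyBound {d : ℕ} (h : IncidenceTheorem K k (12 * d ^ 2))
    (hLi : Set.InjOn SliceLine.pos (L : Set (SliceLine K)))
    (hMi : Set.InjOn SliceLine.pos (M : Set (SliceLine K))) (hk : RegulusBound k M) :
    SubfamilyBound (12 * d ^ 2) (84 * 10 ^ 7 * d ^ 3) k L M := by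
  intro R hR G hG hRd hGd
  have hRG := h R G hRd hGd (hLi.mono (Finset.coe_subset.mpr hR))
    (hMi.mono (Finset.coe_subset.mpr hG)) (hk.mono hG)
  have hsqrt := sqrt_twelve_mul_sq_pow_three_le d
  have hcast : (incidences R G : ℝ) ≤ (84 * 10 ^ 7 * d ^ 3 + k * R.card : ℕ) := by
    push_cast at hRG hsqrt ⊢
    linarith
  exact_mod_cast hcast

theorem incidenceTheorem_of_le {N : ℕ} (hN : N ≤ 10 ^ 10) : IncidenceTheorem K k N := by
  intro L M hL hM _ _ _
  have hsqrt : √N ≤ 10 ^ 5 := Real.sqrt_le_iff.mpr ⟨by positivity, by norm_num; exact_mod_cast hN⟩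
  calc (incidences L M : ℝ) ≤ N * N := by
        exact_mod_cast (incidences_le_mul L M).trans (Nat.mul_le_mul hL hM)
    _ = √N * √N ^ 3 := by
        linear_combination -(√N ^ 2 + N) * Real.sq_sqrt (Nat.cast_nonneg N)
    _ ≤ 2 * 10 ^ 7 * √N ^ 3 + k * L.card := by
        have hmul : √N * √N ^ 3 ≤ 10 ^ 5 * √N ^ 3 := by gcongr
        have hpow : 0 ≤ √N ^ 3 := by positivity
        have hk : (0 : ℝ) ≤ k * L.card := by positivity
        linarith

theorem incidenceTheorem [Infinite K] {p : ℕ} [CharP K p] {N : ℕ} (hN : N ≤ p ^ 2) :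
    IncidenceTheorem K k N := by
  induction N using Nat.strong_induction_on with
  | _ N ih =>
  rcases le_or_gt N (10 ^ 10) with hsmall | hlarge
  · exact incidenceTheorem_of_le hsmall
  intro L M hL hM hLi hMi hk
  -- `L` is cut into `10 ^ 10` parts of size `n`, each of which lies on a surface of degree `D`.
  obtain ⟨n, hn₁, hn₂⟩ : ∃ n, N ≤ 10 ^ 10 * n ∧ 10 ^ 10 * n ≤ 2 * N :=
    ⟨N / 10 ^ 10 + 1, by omega, by omega⟩
  obtain ⟨D, hD⟩ : ∃ D, D = 3 * Nat.sqrt (3 * n) := ⟨_, rfl⟩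
  have hD₂ : D ^ 2 ≤ 27 * n := by
    have := Nat.sqrt_le' (3 * n)
    rw [hD, mul_pow]
    omega
  have hs : √N ^ 2 = N := Real.sq_sqrt (Nat.cast_nonneg N)
  have hDs : (D : ℝ) ≤ √N / 10 ^ 4 := by
    refine le_of_sq_le_sq ?_ (by positivity)
    have hD₂' : 10 ^ 8 * (D : ℝ) ^ 2 ≤ N := by exact_mod_cast (by omega : 10 ^ 8 * D ^ 2 ≤ N)
    rw [div_pow, hs]
    linarith
  have hDp : D < p := lt_of_pow_lt_pow_left₀ 2 (Nat.zero_le p) (by omega)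
  have hcount := incidences_le_of_subfamilyBound hDp hD.ge (by omega) hLi hMi hk
    (fun d hd ↦ (ih (12 * d ^ 2) (by nlinarith) (by nlinarith)).subfamilyBound hLi hMi hk)
    (hL.trans hn₁) hM
  have hDN : (D : ℝ) * N ≤ √N / 10 ^ 4 * √N ^ 2 := by rw [hs]; gcongr
  have hD₃ : (D : ℝ) ^ 3 ≤ (√N / 10 ^ 4) ^ 3 := by gcongr
  have hpow : 0 ≤ √N ^ 3 := by positivity
  calc (incidences L M : ℝ)
      ≤ 10 ^ 10 * (7 * (D * N) + 84 * 10 ^ 7 * D ^ 3) + k * L.card := by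
        rw [← mul_assoc]
        exact_mod_cast hcount
    _ ≤ 2 * 10 ^ 7 * √N ^ 3 + k * L.card := by linarith

end IncidenceBound

section Perturbation

variable {F K : Type*} [Field F] [Field K] [Algebra F K] {t a b : K}

/-- The linear form in the coordinates of a line which gives the numerator of the position after
the transformation `perturb`. -/
def shear (t a : K) (l : SliceLine F) : K :=
  algebraMap F K l.pos + t * algebraMap F K l.slope + a * algebraMap F K l.icpt

/-- The image of a line under a projective transformation with parameters `t`, `a`, `b`. Moving
one family by `perturb t a b` and the other one by `perturb t (-b) (-a)` keeps meeting lines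
meeting, and for generic parameters it gives distinct lines distinct positions. -/
def perturb (t a b : K) (l : SliceLine F) : SliceLine K where
  pos := shear t a l / (1 - b * algebraMap F K l.slope)
  slope := algebraMap F K l.slope / (1 - b * algebraMap F K l.slope)
  icpt := algebraMap F K l.icpt / (1 - b * algebraMap F K l.slope)

variable (F) in
/-- The parameters of `perturb` are generic over `F`: they satisfy no linear relation over `F`
of the kind that occurs when two perturbed lines have the same position. -/
def IsGeneric (t a b : K) : Prop :=
  LinearIndependent F ![1, t, a, b, a * b]

theorem IsGeneric.coeff_eq_zero (h : IsGeneric F t a b) {x₀ x₁ x₂ x₃ x₄ : F}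
    (hx : algebraMap F K x₀ + algebraMap F K x₁ * t + algebraMap F K x₂ * a +
      algebraMap F K x₃ * b + algebraMap F K x₄ * (a * b) = 0) :
    x₀ = 0 ∧ x₁ = 0 ∧ x₂ = 0 ∧ x₃ = 0 := by
  have hzero := Fintype.linearIndependent_iff.mp h ![x₀, x₁, x₂, x₃, x₄] (by
    simpa [Fin.sum_univ_five, Algebra.smul_def] using hx)
  exact ⟨hzero 0, hzero 1, hzero 2, hzero 3⟩

theorem IsGeneric.neg_swap (h : IsGeneric F t a b) : IsGeneric F t (-b) (-a) := by
  refine Fintype.linearIndependent_iff.mpr fun x hx ↦ ?_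
  have hzero := Fintype.linearIndependent_iff.mp h ![x 0, x 1, -x 3, -x 2, x 4] (by
    simp only [Fin.sum_univ_five, Matrix.cons_val, Algebra.smul_def, map_neg] at hx ⊢
    linear_combination hx)
  intro i
  fin_cases i
  exacts [hzero 0, hzero 1, neg_eq_zero.mp (hzero 3), neg_eq_zero.mp (hzero 2), hzero 4]

theorem isGeneric_X : IsGeneric F (RatFunc.X : RatFunc F) (RatFunc.X ^ 2) (RatFunc.X ^ 3) := by
  have hX : LinearIndependent F (fun n : ℕ ↦ (Polynomial.X : Polynomial F) ^ n) := by
    simpa [Polynomial.coe_basisMonomials, Polynomial.monomial_one_right_eq_X_pow] using!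
      (Polynomial.basisMonomials F).linearIndependent
  have hcomp := (hX.comp ![0, 1, 2, 3, 5] (by decide)).map_injOn
    (IsScalarTower.toAlgHom F (Polynomial F) (RatFunc F)).toLinearMap
    (RatFunc.algebraMap_injective F).injOn
  rw [IsGeneric]
  convert! hcomp using 1
  ext i
  fin_cases i <;> simp [RatFunc.algebraMap_X, ← pow_add]

theorem IsGeneric.one_sub_ne_zero (h : IsGeneric F t a b) (c : F) :
    1 - b * algebraMap F K c ≠ 0 := by
  intro hc
  refine one_ne_zero (h.coeff_eq_zero (x₀ := 1) (x₁ := 0) (x₂ := 0) (x₃ := -c) (x₄ := 0) ?_).1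
  simp only [map_one, map_zero, map_neg]
  linear_combination hc

theorem IsGeneric.pos_perturb_injective (h : IsGeneric F t a b) :
    Function.Injective fun l : SliceLine F ↦ (perturb t a b l).pos := by
  intro l m hlm
  have hcross := (div_eq_div_iff (h.one_sub_ne_zero l.slope) (h.one_sub_ne_zero m.slope)).mp hlm
  obtain ⟨hpos, hslope, hicpt, -⟩ := h.coeff_eq_zero (x₀ := l.pos - m.pos)
    (x₁ := l.slope - m.slope) (x₂ := l.icpt - m.icpt)
    (x₃ := m.pos * l.slope - l.pos * m.slope) (x₄ := m.icpt * l.slope - l.icpt * m.slope) (by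
      simp only [shear] at hcross
      simp only [map_sub, map_mul]
      linear_combination hcross)
  exact SliceLine.ext (sub_eq_zero.mp hpos) (sub_eq_zero.mp hslope) (sub_eq_zero.mp hicpt)

theorem IsGeneric.perturb_injective (h : IsGeneric F t a b) :
    Function.Injective (perturb t a b : SliceLine F → SliceLine K) :=
  fun _ _ hlm ↦ h.pos_perturb_injective (congrArg SliceLine.pos hlm)

theorem IsGeneric.meets_perturb (h : IsGeneric F t a b) {l m : SliceLine F} (hlm : Meets l m) :
    Meets (perturb t a b l) (perturb t (-b) (-a) m) := by
  have hl := h.one_sub_ne_zero l.slope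
  have hm := h.neg_swap.one_sub_ne_zero m.slope
  have hlm' := congrArg (algebraMap F K) hlm
  simp only [map_add, map_mul] at hlm'
  refine mul_left_cancel₀ (mul_ne_zero hl hm) ?_
  simp only [perturb, shear]
  generalize hdl : 1 - b * algebraMap F K l.slope = dl at hl ⊢
  generalize hdm : 1 - -a * algebraMap F K m.slope = dm at hm ⊢
  field_simp
  linear_combination hlm' - algebraMap F K l.icpt * hdm + algebraMap F K m.icpt * hdl

theorem IsGeneric.shear_injective (h : IsGeneric F t a b) :
    Function.Injective (shear t a : SliceLine F → K) := by
  intro l m hlm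
  obtain ⟨hpos, hslope, hicpt, -⟩ := h.coeff_eq_zero (x₀ := l.pos - m.pos)
    (x₁ := l.slope - m.slope) (x₂ := l.icpt - m.icpt) (x₃ := 0) (x₄ := 0) (by
      simp only [shear] at hlm
      simp only [map_sub, map_zero]
      linear_combination hlm)
  exact SliceLine.ext (sub_eq_zero.mp hpos) (sub_eq_zero.mp hslope) (sub_eq_zero.mp hicpt)

theorem IsGeneric.one_add_mul_slope_eq (h : IsGeneric F t a b) {α β γ δ : K} {l : SliceLine F}
    (hl : InRegulus α β γ δ (perturb t a b l)) :
    (1 + β * b) * algebraMap F K l.slope = α * shear t a l + β := by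
  have hd := h.one_sub_ne_zero l.slope
  have hpos := div_mul_cancel₀ (shear t a l) hd
  have hslope := hl.1
  simp only [perturb] at hslope
  rw [div_eq_iff hd] at hslope
  linear_combination hslope + α * hpos

theorem IsGeneric.icpt_eq (h : IsGeneric F t a b) {α β γ δ : K} {l : SliceLine F}
    (hl : InRegulus α β γ δ (perturb t a b l)) :
    algebraMap F K l.icpt = γ * shear t a l + δ * (1 - b * algebraMap F K l.slope) := by
  have hd := h.one_sub_ne_zero l.slope
  have hpos := div_mul_cancel₀ (shear t a l) hd
  have hicpt := hl.2
  simp only [perturb] at hicpt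
  rw [div_eq_iff hd] at hicpt
  linear_combination hicpt + γ * hpos

theorem IsGeneric.slope_eq_of_inRegulus (h : IsGeneric F t a b) {β γ δ : K}
    {l m : SliceLine F} (hl : InRegulus 0 β γ δ (perturb t a b l))
    (hm : InRegulus 0 β γ δ (perturb t a b m)) : l.slope = m.slope := by
  have hl' := h.one_add_mul_slope_eq hl
  have hm' := h.one_add_mul_slope_eq hm
  have hβb : 1 + β * b ≠ 0 := by
    intro h0
    have hβ : β = 0 := by linear_combination algebraMap F K l.slope * h0 - hl'
    simp [hβ] at h0
  refine (algebraMap F K).injective (mul_left_cancel₀ hβb ?_)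
  rw [hl', hm', zero_mul, zero_mul]

theorem IsGeneric.injOn_of_forall_inRegulus (h : IsGeneric F t a b) {Z : Set (SliceLine F)}
    {α β γ δ : K} (hZ : ∀ z ∈ Z, InRegulus α β γ δ (perturb t a b z)) :
    Z.InjOn SliceLine.pos ∨ Z.InjOn SliceLine.slope ∨ Z.InjOn SliceLine.icpt := by
  by_cases hα : α = 0
  · subst hα
    have hslope : ∀ z ∈ Z, ∀ z' ∈ Z, z.slope = z'.slope :=
      fun z hz z' hz' ↦ h.slope_eq_of_inRegulus (hZ z hz) (hZ z' hz')
    by_cases hγ : γ = 0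
    · refine .inl fun z hz z' hz' hpos ↦ SliceLine.ext hpos (hslope z hz z' hz')
        ((algebraMap F K).injective ?_)
      rw [h.icpt_eq (hZ z hz), h.icpt_eq (hZ z' hz'), hslope z hz z' hz', hγ, zero_mul, zero_mul]
    · refine .inr (.inr fun z hz z' hz' hzz' ↦ h.shear_injective (mul_left_cancel₀ hγ ?_))
      have himage := congrArg (algebraMap F K) hzz'
      rw [h.icpt_eq (hZ z hz), h.icpt_eq (hZ z' hz'), hslope z hz z' hz'] at himage
      exact add_right_cancel himage
  · refine .inr (.inl fun z hz z' hz' hzz' ↦ h.shear_injective (mul_left_cancel₀ hα ?_))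
    linear_combination h.one_add_mul_slope_eq (hZ z' hz') - h.one_add_mul_slope_eq (hZ z hz) +
      (1 + β * b) * congrArg (algebraMap F K) hzz'

theorem IsGeneric.regulusBound_map_perturb (h : IsGeneric F t a b) {P Q S : Finset F}
    {M : Finset (SliceLine F)} (hM : ∀ m ∈ M, m.pos ∈ P ∧ m.slope ∈ Q ∧ m.icpt ∈ S) :
    RegulusBound (P.card + Q.card + S.card) (M.map ⟨perturb t a b, h.perturb_injective⟩) := by
  intro α β γ δ G hGM hG
  obtain ⟨Z, hZM, rfl⟩ := Finset.subset_map_iff.mp hGM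
  rw [Finset.card_map]
  rcases h.injOn_of_forall_inRegulus (Z := Z)
    (fun z hz ↦ hG _ (Finset.mem_map_of_mem _ hz)) with hinj | hinj | hinj
  · have := Finset.card_le_card_of_injOn _ (fun z hz ↦ (hM z (hZM hz)).1) hinj
    omega
  · have := Finset.card_le_card_of_injOn _ (fun z hz ↦ (hM z (hZM hz)).2.1) hinj
    omega
  · have := Finset.card_le_card_of_injOn _ (fun z hz ↦ (hM z (hZM hz)).2.2) hinj
    omega

theorem IsGeneric.incidences_le_incidences_map_perturb [DecidableEq F] [DecidableEq K]
    (h : IsGeneric F t a b) (L M : Finset (SliceLine F)) :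
    incidences L M ≤ incidences (L.map ⟨perturb t a b, h.perturb_injective⟩)
      (M.map ⟨perturb t (-b) (-a), h.neg_swap.perturb_injective⟩) := by
  refine Finset.card_le_card_of_injOn (Prod.map (perturb t a b) (perturb t (-b) (-a))) ?_
    (h.perturb_injective.prodMap h.neg_swap.perturb_injective).injOn
  intro q hq
  obtain ⟨hl, hm, hlm⟩ := Rel.mem_interedges_iff.mp hq
  exact Rel.mem_interedges_iff.mpr
    ⟨Finset.mem_map_of_mem _ hl, Finset.mem_map_of_mem _ hm, h.meets_perturb hlm⟩

theorem incidences_le_of_mem_box [DecidableEq F] {p : ℕ} [CharP F p] {P Q S : Finset F}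
    {L M : Finset (SliceLine F)} (hM : ∀ m ∈ M, m.pos ∈ P ∧ m.slope ∈ Q ∧ m.icpt ∈ S) {N : ℕ}
    (hLN : L.card ≤ N) (hMN : M.card ≤ N) (hN : N ≤ p ^ 2) :
    (incidences L M : ℝ) ≤
      2 * 10 ^ 7 * √N ^ 3 + (P.card + Q.card + S.card : ℕ) * L.card := by
  classical
  have : CharP (RatFunc F) p := charP_of_injective_algebraMap (algebraMap F (RatFunc F)).injective p
  have : Infinite (RatFunc F) := .of_injective _ (RatFunc.algebraMap_injective F)
  have h := isGeneric_X (F := F)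
  have hmain := incidenceTheorem (K := RatFunc F) (k := P.card + Q.card + S.card) hN
    (L.map ⟨_, h.perturb_injective⟩) (M.map ⟨_, h.neg_swap.perturb_injective⟩)
    (by rwa [Finset.card_map]) (by rwa [Finset.card_map])
    (by
      rw [Finset.coe_map]
      exact h.pos_perturb_injective.injOn.image_of_comp)
    (by
      rw [Finset.coe_map]
      exact h.neg_swap.pos_perturb_injective.injOn.image_of_comp)
    (h.neg_swap.regulusBound_map_perturb hM)
  rw [Finset.card_map] at hmain
  exact le_trans (mod_cast h.incidences_le_incidences_map_perturb L M) hmain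

end Perturbation

section Energy

variable {F : Type*}

/-- The lines whose coordinates `pos`, `slope` and `icpt` lie in `P`, `Q` and `S`. -/
def boxLines (P Q S : Finset F) : Finset (SliceLine F) :=
  (P ×ˢ Q ×ˢ S).map ⟨fun z ↦ ⟨z.1, z.2.1, z.2.2⟩, fun z w h ↦ by
    simpa only [SliceLine.mk.injEq, Prod.ext_iff] using h⟩

theorem mem_boxLines {P Q S : Finset F} {l : SliceLine F} :
    l ∈ boxLines P Q S ↔ l.pos ∈ P ∧ l.slope ∈ Q ∧ l.icpt ∈ S := by
  simp only [boxLines, Finset.mem_map, Finset.mem_product]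
  exact ⟨fun ⟨_, hz, hzl⟩ ↦ hzl ▸ hz, fun h ↦ ⟨(l.pos, l.slope, l.icpt), h, rfl⟩⟩

theorem card_boxLines (P Q S : Finset F) :
    (boxLines P Q S).card = P.card * (Q.card * S.card) := by
  rw [boxLines, Finset.card_map, Finset.card_product, Finset.card_product]

variable [Field F] [DecidableEq F]

theorem addEnergy_mul_card_sq_le {A B S : Finset F} (hB : 0 ∉ B) :
    A.addEnergy S * B.card ^ 2 ≤
      incidences (boxLines (A * B) B⁻¹ S) (boxLines (A * B) B⁻¹ S) := by
  rw [sq, ← Finset.card_product, Finset.addEnergy, ← Finset.card_product]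
  refine Finset.card_le_card_of_injOn (fun w ↦
    (⟨w.1.1.1 * w.2.1, w.2.2⁻¹, w.1.2.2⟩, ⟨w.1.1.2 * w.2.2, w.2.1⁻¹, w.1.2.1⟩)) ?_ ?_
  · rintro ⟨⟨⟨a, a'⟩, s, s'⟩, b, b'⟩ hw
    simp only [Finset.mem_coe, Finset.mem_product, Finset.mem_filter] at hw
    obtain ⟨⟨⟨⟨ha, ha'⟩, hs, hs'⟩, hsum⟩, hb, hb'⟩ := hw
    have hb0 : b ≠ 0 := ne_of_mem_of_not_mem hb hB
    have hb0' : b' ≠ 0 := ne_of_mem_of_not_mem hb' hB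
    refine Rel.mem_interedges_iff.mpr ⟨mem_boxLines.mpr ⟨Finset.mul_mem_mul ha hb,
      Finset.inv_mem_inv hb', hs'⟩, mem_boxLines.mpr ⟨Finset.mul_mem_mul ha' hb',
      Finset.inv_mem_inv hb, hs⟩, ?_⟩
    simp only [Meets]
    field_simp
    exact hsum.symm
  · rintro ⟨⟨⟨a, a'⟩, s, s'⟩, b, b'⟩ hw ⟨⟨⟨c, c'⟩, t, t'⟩, d, d'⟩ - heq
    simp only [Finset.mem_coe, Finset.mem_product] at hw
    have hb0 : b ≠ 0 := ne_of_mem_of_not_mem hw.2.1 hB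
    have hb0' : b' ≠ 0 := ne_of_mem_of_not_mem hw.2.2 hB
    simp only [Prod.mk.injEq, SliceLine.mk.injEq, inv_inj] at heq
    obtain ⟨⟨hab, rfl, rfl⟩, hab', rfl, rfl⟩ := heq
    rw [mul_right_cancel₀ hb0 hab, mul_right_cancel₀ hb0' hab']

theorem card_le_card_mul_self {A : Finset F} (hA : 2 ≤ A.card) : A.card ≤ (A * A).card := by
  obtain ⟨b, hbA, hb⟩ := A.exists_mem_ne hA 0
  exact Finset.card_le_card_mul_right_of_injective hbA (mul_left_injective₀ hb)

end Energy

/-- The shape of the energy bound for a set of size `n` with product set of size `M`, weighted by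
a function `f` with `∑ f ^ 2 = T` and `∑ f = R`. For the indicator function of a set of size `σ`
one has `T = R = σ`. -/
noncomputable def energyBound (n M T R : ℝ) : ℝ :=
  R * √T * √M ^ 3 / √n + T * M ^ 2 / n + R ^ 2 * M / n

section EnergyBound

variable {n M T R : ℝ}

theorem energyBound_nonneg (hn : 0 ≤ n) (hM : 0 ≤ M) (hT : 0 ≤ T) (hR : 0 ≤ R) :
    0 ≤ energyBound n M T R := by
  unfold energyBound
  positivity

theorem energyBound_mono (hn : 0 ≤ n) (hM : 0 ≤ M) {T' R' : ℝ} (hT : T ≤ T') (hR₀ : 0 ≤ R)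
    (hR : R ≤ R') : energyBound n M T R ≤ energyBound n M T' R' := by
  unfold energyBound
  have : 0 ≤ R' := hR₀.trans hR
  gcongr

theorem sq_mul_energyBound {Δ : ℝ} (hΔ : 0 ≤ Δ) :
    Δ ^ 2 * energyBound n M T R = energyBound n M (Δ ^ 2 * T) (Δ * R) := by
  simp only [energyBound, Real.sqrt_mul (sq_nonneg Δ), Real.sqrt_sq hΔ]
  ring

theorem le_energyBound_of_mul_sq_le {E a σ : ℝ} (ha : 0 < a) (hσ : 0 ≤ σ) (han : a ≤ n)
    (hna : n ≤ 2 * a) (hnM : n ≤ M)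
    (hE : E * a ^ 2 ≤ 2 * 10 ^ 7 * √(M * (a * σ)) ^ 3 + (M + a + σ) * (M * (a * σ))) :
    E ≤ 10 ^ 8 * energyBound n M σ σ := by
  have hn : 0 < n := ha.trans_le han
  have hM : 0 < M := hn.trans_le hnM
  have hsqrt : √(M * (a * σ)) ^ 3 = √M ^ 3 * (a * √a) * (σ * √σ) := by
    rw [Real.sqrt_mul hM.le, Real.sqrt_mul ha.le]
    linear_combination √M ^ 3 * √a * √σ * (√σ ^ 2 * Real.sq_sqrt ha.le + a * Real.sq_sqrt hσ)
  have hsqrt_le : 1 / √a ≤ 2 / √n := by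
    rw [div_le_div_iff₀ (by positivity) (by positivity), one_mul]
    refine Real.sqrt_le_iff.mpr ⟨by positivity, ?_⟩
    rw [mul_pow, Real.sq_sqrt ha.le]
    linarith
  have hinv_le : 1 / a ≤ 2 / n := by
    rw [div_le_div_iff₀ ha hn]
    linarith
  calc E ≤ (2 * 10 ^ 7 * √(M * (a * σ)) ^ 3 + (M + a + σ) * (M * (a * σ))) / a ^ 2 :=
        (le_div_iff₀ (by positivity)).mpr hE
    _ = 2 * 10 ^ 7 * (√M ^ 3 * (σ * √σ)) * (1 / √a) + (M + a + σ) * (M * σ) * (1 / a) := by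
        rw [hsqrt]
        field_simp
        linear_combination 2 * 10 ^ 7 * σ * √M ^ 3 * √σ * Real.sq_sqrt ha.le
    _ ≤ 2 * 10 ^ 7 * (√M ^ 3 * (σ * √σ)) * (2 / √n) + (M + M + σ) * (M * σ) * (2 / n) := by
        have : a ≤ M := han.trans hnM
        gcongr
    _ = 4 * 10 ^ 7 * (σ * √σ * √M ^ 3 / √n) + 4 * (σ * M ^ 2 / n) + 2 * (σ ^ 2 * M / n) := by ring
    _ ≤ 10 ^ 8 * energyBound n M σ σ := by
        have h₁ : 0 ≤ σ * √σ * √M ^ 3 / √n := by positivity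
        have h₂ : 0 ≤ σ * M ^ 2 / n := by positivity
        have h₃ : 0 ≤ σ ^ 2 * M / n := by positivity
        unfold energyBound
        linarith

theorem mul_sqrt_mul_le_energyBound (hn : 0 < n) (hnM : n ≤ M) (hT : 0 ≤ T)
    (hR : 0 ≤ R) : n * (√T * R) ≤ energyBound n M T R := by
  have hM : 0 ≤ M := hn.le.trans hnM
  have hle : n ≤ √M ^ 3 / √n := by
    rw [le_div_iff₀ (Real.sqrt_pos.mpr hn)]
    calc n * √n = √n ^ 3 := by rw [pow_succ, Real.sq_sqrt hn.le]
      _ ≤ √M ^ 3 := by gcongr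
  calc n * (√T * R) ≤ √M ^ 3 / √n * (√T * R) := by gcongr
    _ = R * √T * √M ^ 3 / √n := by ring
    _ ≤ energyBound n M T R := by
      rw [energyBound, add_assoc]
      exact le_add_of_nonneg_right (by positivity)

theorem mul_sq_div_le_energyBound (hn : 0 ≤ n) (hM : 0 ≤ M) (hR : 0 ≤ R) :
    T * M ^ 2 / n ≤ energyBound n M T R := by
  rw [energyBound, add_right_comm]
  exact le_add_of_nonneg_left (by positivity)

theorem energyBound_pow (hn : 0 < n) (hM : 0 ≤ M) {k : ℕ} (hk : 1 ≤ k) :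
    energyBound n M T (n ^ (k - 1)) = n ^ ((k : ℝ) - 3 / 2) * T ^ ((1 : ℝ) / 2) *
      M ^ ((3 : ℝ) / 2) + n ^ (2 * (k : ℝ) - 3) * M + T * M ^ 2 / n := by
  obtain ⟨j, rfl⟩ := Nat.exists_eq_add_of_le' hk
  have hhalf : n ^ (((j + 1 : ℕ) : ℝ) - 3 / 2) = n ^ j / √n := by
    rw [Real.sqrt_eq_rpow, ← Real.rpow_natCast, ← Real.rpow_sub hn]
    congr 1
    push_cast
    ring
  have hdouble : n ^ (2 * ((j + 1 : ℕ) : ℝ) - 3) = (n ^ j) ^ 2 / n := by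
    rw [← pow_mul, ← Real.rpow_natCast, ← Real.rpow_sub_one hn.ne']
    congr 1
    push_cast
    ring
  have hthree : M ^ ((3 : ℝ) / 2) = √M ^ 3 := by
    rw [Real.sqrt_eq_rpow, ← Real.rpow_mul_natCast hM]
    norm_num
  rw [hhalf, hdouble, hthree, ← Real.sqrt_eq_rpow, energyBound, Nat.add_sub_cancel]
  ring

end EnergyBound

theorem addEnergy_le_energyBound {F : Type*} [Field F] [DecidableEq F] {p : ℕ} [CharP F p]
    {A S : Finset F} (hA : 2 ≤ A.card) (hp : A.card * S.card * (A * A).card ≤ p ^ 2) :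
    (A.addEnergy S : ℝ) ≤ 10 ^ 8 * energyBound A.card (A * A).card S.card S.card := by
  obtain ⟨B, hB⟩ : ∃ B, B = A.erase 0 := ⟨_, rfl⟩
  have hBA : B ⊆ A := hB ▸ A.erase_subset 0
  have hcard : A.card ≤ B.card + 1 := hB ▸ Nat.sub_le_iff_le_add.mp A.pred_card_le_card_erase
  have hlines : (boxLines (A * B) B⁻¹ S).card ≤ (A * A).card * (B.card * S.card) := by
    rw [card_boxLines, Finset.card_inv]
    gcongr
  have hinc := incidences_le_of_mem_box (p := p) (fun m hm ↦ mem_boxLines.mp hm) hlines hlines (by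
    calc (A * A).card * (B.card * S.card) ≤ (A * A).card * (A.card * S.card) := by gcongr
      _ ≤ p ^ 2 := by linarith)
  have henergy : (A.addEnergy S * B.card ^ 2 : ℝ) ≤
      incidences (boxLines (A * B) B⁻¹ S) (boxLines (A * B) B⁻¹ S) :=
    mod_cast addEnergy_mul_card_sq_le (hB ▸ A.notMem_erase 0)
  refine le_energyBound_of_mul_sq_le (a := B.card) (mod_cast by omega) (by positivity)
    (mod_cast Finset.card_le_card hBA) (mod_cast by omega) (mod_cast card_le_card_mul_self hA)
    (henergy.trans (hinc.trans ?_))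
  have hAB : ((A * B).card : ℝ) ≤ (A * A).card := mod_cast by gcongr
  rw [Finset.card_inv]
  push_cast
  gcongr
  exact_mod_cast hlines

section AddConv

variable {G : Type*}

/-- The part of `B` where `f` lies in `[s, 2 * s)`. -/
noncomputable def dyadicLevel (B : Finset G) (f : G → ℝ) (s : ℝ) : Finset G :=
  {x ∈ B | s ≤ f x ∧ f x < 2 * s}

theorem dyadicLevel_subset (B : Finset G) (f : G → ℝ) (s : ℝ) : dyadicLevel B f s ⊆ B :=
  Finset.filter_subset _ _

theorem mul_card_dyadicLevel_le {B : Finset G} {f : G → ℝ} (hf : ∀ x ∈ B, 0 ≤ f x) (s : ℝ) :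
    s * (dyadicLevel B f s).card ≤ ∑ x ∈ B, f x := by
  calc s * (dyadicLevel B f s).card = ∑ _x ∈ dyadicLevel B f s, s := by
        rw [Finset.sum_const, nsmul_eq_mul, mul_comm]
    _ ≤ ∑ x ∈ dyadicLevel B f s, f x :=
        Finset.sum_le_sum fun x hx ↦ (Finset.mem_filter.mp hx).2.1
    _ ≤ ∑ x ∈ B, f x :=
        Finset.sum_le_sum_of_subset_of_nonneg (dyadicLevel_subset B f s) fun x hx _ ↦ hf x hx

theorem sq_mul_card_dyadicLevel_le (B : Finset G) (f : G → ℝ) {s : ℝ} (hs : 0 ≤ s) :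
    s ^ 2 * (dyadicLevel B f s).card ≤ ∑ x ∈ B, f x ^ 2 := by
  calc s ^ 2 * (dyadicLevel B f s).card = ∑ _x ∈ dyadicLevel B f s, s ^ 2 := by
        rw [Finset.sum_const, nsmul_eq_mul, mul_comm]
    _ ≤ ∑ x ∈ dyadicLevel B f s, f x ^ 2 :=
        Finset.sum_le_sum fun x hx ↦ pow_le_pow_left₀ hs (Finset.mem_filter.mp hx).2.1 2
    _ ≤ ∑ x ∈ B, f x ^ 2 :=
        Finset.sum_le_sum_of_subset_of_nonneg (dyadicLevel_subset B f s) fun x _ _ ↦ sq_nonneg _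

variable [DecidableEq G]

theorem le_add_sum_dyadicLevel {B : Finset G} {f : G → ℝ} {τ : ℝ} (hτ : 0 ≤ τ) {x : G}
    (hx : x ∈ B) {J : ℕ} (hJ : f x < 2 ^ J * τ) :
    f x ≤ (if f x < τ then f x else 0) + ∑ i ∈ Finset.range J,
      2 * (2 ^ i * τ) * if x ∈ dyadicLevel B f (2 ^ i * τ) then 1 else 0 := by
  have hnonneg : ∀ i ∈ Finset.range J,
      0 ≤ 2 * (2 ^ i * τ) * if x ∈ dyadicLevel B f (2 ^ i * τ) then (1 : ℝ) else 0 :=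
    fun i _ ↦ by split_ifs <;> positivity
  split_ifs with hlow
  · exact le_add_of_nonneg_right (Finset.sum_nonneg hnonneg)
  have hτ_pos : 0 < τ := by
    refine hτ.lt_of_ne fun h ↦ ?_
    rw [← h, mul_zero] at hJ
    exact hlow (h ▸ hJ)
  obtain ⟨i, hlower, hupper⟩ :=
    exists_nat_pow_near ((one_le_div hτ_pos).mpr (not_lt.mp hlow)) one_lt_two
  rw [le_div_iff₀ hτ_pos] at hlower
  rw [div_lt_iff₀ hτ_pos, pow_succ', mul_assoc] at hupper
  have hiJ : i ∈ Finset.range J := by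
    rw [Finset.mem_range, ← pow_lt_pow_iff_right₀ (one_lt_two (α := ℝ))]
    exact lt_of_mul_lt_mul_right (hlower.trans_lt hJ) hτ
  rw [zero_add]
  refine le_trans ?_ (Finset.single_le_sum hnonneg hiJ)
  have hmem : x ∈ dyadicLevel B f (2 ^ i * τ) := Finset.mem_filter.mpr ⟨hx, hlower, hupper⟩
  rw [if_pos hmem, mul_one]
  exact hupper.le

/-- The convolution of the indicator function of `A` with the restriction of `f` to `B`. -/
def addConv [Add G] (A B : Finset G) (f : G → ℝ) (y : G) : ℝ :=
  ∑ q ∈ A ×ˢ B with q.1 + q.2 = y, f q.2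

theorem sum_addConv_sq_le [Add G] [IsLeftCancelAdd G] (A B : Finset G) (f : G → ℝ) :
    ∑ y ∈ A + B, addConv A B f y ^ 2 ≤ (A.card : ℝ) ^ 2 * ∑ x ∈ B, f x ^ 2 := by
  have hcard (y : G) : ((A ×ˢ B).filter fun q ↦ q.1 + q.2 = y).card ≤ A.card := by
    refine Finset.card_le_card_of_injOn Prod.fst (fun q hq ↦ ?_) fun q hq q' hq' hqq' ↦ ?_
    · exact (Finset.mem_product.mp (Finset.mem_filter.mp hq).1).1
    · have hsum := (Finset.mem_filter.mp hq).2.trans (Finset.mem_filter.mp hq').2.symm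
      rw [hqq'] at hsum
      exact Prod.ext hqq' (add_left_cancel hsum)
  calc ∑ y ∈ A + B, addConv A B f y ^ 2
      ≤ ∑ y ∈ A + B, A.card * ∑ q ∈ A ×ˢ B with q.1 + q.2 = y, f q.2 ^ 2 := by
        refine Finset.sum_le_sum fun y _ ↦ sq_sum_le_card_mul_sum_sq.trans ?_
        gcongr
        exact hcard y
    _ = A.card * ∑ q ∈ A ×ˢ B, f q.2 ^ 2 := by
        rw [← Finset.mul_sum, Finset.sum_fiberwise_of_maps_to]
        exact fun q hq ↦
          Finset.add_mem_add (Finset.mem_product.mp hq).1 (Finset.mem_product.mp hq).2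
    _ = (A.card : ℝ) ^ 2 * ∑ x ∈ B, f x ^ 2 := by
        simp only [Finset.sum_product, Finset.sum_const, nsmul_eq_mul]
        ring

theorem addConv_indicator [Add G] {A B S : Finset G} (hS : S ⊆ B) (y : G) :
    addConv A B (fun x ↦ if x ∈ S then 1 else 0) y =
      ((A ×ˢ S).filter fun q ↦ q.1 + q.2 = y).card := by
  rw [addConv, Finset.sum_boole]
  congr 2
  ext q
  have := @hS q.2
  simp only [Finset.mem_filter, Finset.mem_product]
  tauto

theorem sum_addConv_indicator_sq [Add G] {A B S : Finset G} (hS : S ⊆ B) :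
    ∑ y ∈ A + B, addConv A B (fun x ↦ if x ∈ S then 1 else 0) y ^ 2 = A.addEnergy S := by
  simp only [addConv_indicator hS, Finset.addEnergy_eq_sum_sq', Nat.cast_sum, Nat.cast_pow]
  refine (Finset.sum_subset (Finset.add_subset_add_left hS) fun y _ hy ↦ ?_).symm
  have hempty : (A ×ˢ S).filter (fun q ↦ q.1 + q.2 = y) = ∅ := Finset.filter_eq_empty_iff.mpr
    fun q hq hqy ↦ hy (hqy ▸ Finset.add_mem_add (Finset.mem_product.mp hq).1
      (Finset.mem_product.mp hq).2)
  rw [hempty, Finset.card_empty, Nat.cast_zero, zero_pow two_ne_zero]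

theorem addConv_le_add_sum_dyadicLevel [Add G] (A : Finset G) {B : Finset G} {f : G → ℝ} {τ : ℝ}
    (hτ : 0 ≤ τ) {J : ℕ} (hJ : ∀ x ∈ B, f x < 2 ^ J * τ) (y : G) :
    addConv A B f y ≤ addConv A B (fun x ↦ if f x < τ then f x else 0) y +
      ∑ i ∈ Finset.range J, 2 * (2 ^ i * τ) *
        addConv A B (fun x ↦ if x ∈ dyadicLevel B f (2 ^ i * τ) then 1 else 0) y := by
  simp only [addConv, Finset.mul_sum]
  rw [Finset.sum_comm, ← Finset.sum_add_distrib]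
  refine Finset.sum_le_sum fun q hq ↦ ?_
  have hqB := (Finset.mem_product.mp (Finset.mem_filter.mp hq).1).2
  exact le_add_sum_dyadicLevel hτ hqB (hJ q.2 hqB)

theorem addConv_sq_le_add_sum_dyadicLevel [Add G] (A : Finset G) {B : Finset G} {f : G → ℝ}
    (hf : ∀ x ∈ B, 0 ≤ f x) {τ : ℝ} (hτ : 0 ≤ τ) {J : ℕ} (hJ : ∀ x ∈ B, f x < 2 ^ J * τ) (y : G) :
    addConv A B f y ^ 2 ≤ 2 * addConv A B (fun x ↦ if f x < τ then f x else 0) y ^ 2 +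
      8 * J * ∑ i ∈ Finset.range J, (2 ^ i * τ) ^ 2 *
        addConv A B (fun x ↦ if x ∈ dyadicLevel B f (2 ^ i * τ) then 1 else 0) y ^ 2 := by
  have hconv : 0 ≤ addConv A B f y := Finset.sum_nonneg fun q hq ↦
    hf q.2 (Finset.mem_product.mp (Finset.mem_filter.mp hq).1).2
  refine (pow_le_pow_left₀ hconv (addConv_le_add_sum_dyadicLevel A hτ hJ y) 2).trans
    (add_sq_le.trans ?_)
  rw [mul_add]
  gcongr 2 * _ + ?_
  refine (mul_le_mul_of_nonneg_left sq_sum_le_card_mul_sum_sq zero_le_two).trans (le_of_eq ?_)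
  simp only [Finset.card_range, Finset.mul_sum]
  exact Finset.sum_congr rfl fun i _ ↦ by ring

theorem sum_addConv_sq_le_add_sum_addEnergy [Add G] [IsLeftCancelAdd G] (A : Finset G)
    {B : Finset G} {f : G → ℝ} (hf : ∀ x ∈ B, 0 ≤ f x) {τ : ℝ} (hτ : 0 ≤ τ) {J : ℕ}
    (hJ : ∀ x ∈ B, f x < 2 ^ J * τ) :
    ∑ y ∈ A + B, addConv A B f y ^ 2 ≤ 2 * ((A.card : ℝ) ^ 2 * (τ * ∑ x ∈ B, f x)) +
      8 * J * ∑ i ∈ Finset.range J,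
        (2 ^ i * τ) ^ 2 * A.addEnergy (dyadicLevel B f (2 ^ i * τ)) := by
  have hlow : ∑ x ∈ B, (if f x < τ then f x else 0) ^ 2 ≤ τ * ∑ x ∈ B, f x := by
    rw [Finset.mul_sum]
    refine Finset.sum_le_sum fun x hx ↦ ?_
    have := hf x hx
    split_ifs with hxτ
    · rw [sq]
      gcongr
    · rw [zero_pow two_ne_zero]
      positivity
  refine (Finset.sum_le_sum fun y _ ↦ addConv_sq_le_add_sum_dyadicLevel A hf hτ hJ y).trans ?_
  rw [Finset.sum_add_distrib, ← Finset.mul_sum, ← Finset.mul_sum, Finset.sum_comm]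
  simp only [← Finset.mul_sum, sum_addConv_indicator_sq (dyadicLevel_subset B f _)]
  gcongr
  exact (sum_addConv_sq_le A B _).trans (by gcongr)

end AddConv

section SumEnergy

variable {G : Type*} [AddCommMonoid G] [DecidableEq G]

/-- The number `r_{jA}(x)` of representations of `x` as an ordered sum of `j` elements of `A`. -/
def repCount (j : ℕ) (A : Finset G) (x : G) : ℕ :=
  ((Fintype.piFinset fun _ : Fin j ↦ A).filter fun g ↦ ∑ i, g i = x).card

/-- The energy `T_j(A)`, the number of solutions of `a₁ + ⋯ + a_j = a_{j+1} + ⋯ + a_{2j}`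
in `A`. -/
def sumEnergy (j : ℕ) (A : Finset G) : ℕ :=
  (((Fintype.piFinset fun _ : Fin j ↦ A) ×ˢ (Fintype.piFinset fun _ : Fin j ↦ A)).filter
    fun q ↦ ∑ i, q.1 i = ∑ i, q.2 i).card

theorem sum_mem_nsmul {j : ℕ} {A : Finset G} {g : Fin j → G}
    (hg : g ∈ Fintype.piFinset fun _ ↦ A) : ∑ i, g i ∈ j • A :=
  Finset.mem_nsmul.mpr ⟨fun i ↦ ⟨g i, Fintype.mem_piFinset.mp hg i⟩, List.sum_ofFn⟩

theorem sum_repCount (j : ℕ) (A : Finset G) : ∑ x ∈ j • A, repCount j A x = A.card ^ j := by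
  rw [← Fintype.card_piFinset_const A j]
  exact (Finset.card_eq_sum_card_fiberwise fun _ hg ↦ sum_mem_nsmul hg).symm

theorem card_filter_product_self_eq_sum_sq {α β : Type*} [DecidableEq β] {s : Finset α}
    {t : Finset β} {h : α → β} (hst : ∀ g ∈ s, h g ∈ t) :
    ((s ×ˢ s).filter fun q ↦ h q.1 = h q.2).card =
      ∑ x ∈ t, (s.filter fun g ↦ h g = x).card ^ 2 := by
  rw [Finset.card_eq_sum_card_fiberwise (f := fun q ↦ h q.1) (t := t)
    fun q hq ↦ hst _ (Finset.mem_product.mp (Finset.mem_filter.mp hq).1).1]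
  refine Finset.sum_congr rfl fun x _ ↦ ?_
  rw [sq, ← Finset.card_product]
  congr 1
  ext q
  simp only [Finset.mem_filter, Finset.mem_product]
  grind

theorem sumEnergy_eq_sum_sq (j : ℕ) (A : Finset G) :
    sumEnergy j A = ∑ x ∈ j • A, repCount j A x ^ 2 :=
  card_filter_product_self_eq_sum_sq fun _ hg ↦ sum_mem_nsmul hg

theorem repCount_succ (j : ℕ) (A : Finset G) (y : G) :
    (repCount (j + 1) A y : ℝ) = addConv A (j • A) (fun x ↦ repCount j A x) y := by
  have hmaps : ∀ g ∈ (Fintype.piFinset fun _ : Fin (j + 1) ↦ A).filter (∑ i, · i = y),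
      (g 0, ∑ i : Fin j, g i.succ) ∈ (A ×ˢ (j • A)).filter fun q ↦ q.1 + q.2 = y := by
    intro g hg
    obtain ⟨hgA, hgy⟩ := Finset.mem_filter.mp hg
    rw [Fin.sum_univ_succ] at hgy
    rw [Fintype.mem_piFinset] at hgA
    exact Finset.mem_filter.mpr ⟨Finset.mem_product.mpr
      ⟨hgA 0, sum_mem_nsmul (Fintype.mem_piFinset.mpr fun i : Fin j ↦ hgA i.succ)⟩, hgy⟩
  rw [repCount, Finset.card_eq_sum_card_fiberwise hmaps, Nat.cast_sum, addConv]
  refine Finset.sum_congr rfl fun q hq ↦ ?_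
  obtain ⟨hqA, hqy⟩ := Finset.mem_filter.mp hq
  have hqA := (Finset.mem_product.mp hqA).1
  rw [repCount]
  congr 1
  refine Finset.card_nbij' Fin.tail (Fin.cons (α := fun _ ↦ G) q.1) (fun g hg ↦ ?_)
    (fun g hg ↦ ?_) (fun g hg ↦ ?_) fun g _ ↦ Fin.tail_cons (α := fun _ ↦ G) q.1 g
  · simp only [Finset.mem_coe, Finset.mem_filter, Fintype.mem_piFinset,
      Prod.ext_iff] at hg ⊢
    exact ⟨fun i ↦ hg.1.1 (Fin.succ i), hg.2.2⟩
  · simp only [Finset.mem_coe, Finset.mem_filter, Fintype.mem_piFinset,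
      Prod.ext_iff, Fin.forall_fin_succ, Fin.sum_univ_succ, Fin.cons_zero, Fin.cons_succ,
      true_and] at hg ⊢
    exact ⟨⟨⟨hqA, hg.1⟩, hg.2 ▸ hqy⟩, hg.2⟩
  · rw [← congrArg Prod.fst (Finset.mem_filter.mp hg).2]
    exact Fin.cons_self_tail g

theorem sumEnergy_succ_eq_sum_addConv_sq (j : ℕ) (A : Finset G) :
    (sumEnergy (j + 1) A : ℝ) =
      ∑ y ∈ A + j • A, addConv A (j • A) (fun x ↦ repCount j A x) y ^ 2 := by
  simp only [sumEnergy_eq_sum_sq, succ_nsmul', Nat.cast_sum, Nat.cast_pow, repCount_succ]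

end SumEnergy

theorem natLog_two_add_one_le (n : ℕ) : (Nat.log 2 n + 1 : ℝ) ≤ 3 * max 1 (Real.log n) := by
  have hlog : (Nat.log 2 n : ℝ) ≤ 2 * max 1 (Real.log n) := by
    have h := Real.natLog_le_logb n 2
    rw [Real.logb, Nat.cast_ofNat, le_div_iff₀ (Real.log_pos one_lt_two)] at h
    have h_half : (1 / 2 : ℝ) ≤ Real.log 2 := by linarith [Real.log_two_gt_d9]
    have hmax := le_max_right 1 (Real.log n)
    have hmul := mul_le_mul_of_nonneg_left h_half (Nat.cast_nonneg (α := ℝ) (Nat.log 2 n))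
    linarith
  linarith [le_max_left 1 (Real.log n)]

theorem lt_two_pow_natLog_mul_div {n : ℕ} (hn : n ≠ 0) {t : ℝ} (ht : 0 < t) :
    t < 2 ^ (Nat.log 2 n + 1) * (t / n) := by
  rw [← mul_div_assoc, lt_div_iff₀ (by positivity), mul_comm]
  gcongr
  exact_mod_cast Nat.lt_pow_succ_log_self one_lt_two n

section Field

variable {F : Type*} [Field F] [DecidableEq F] {p : ℕ} [CharP F p] {A B : Finset F} {f : F → ℝ}

theorem sq_mul_addEnergy_dyadicLevel_le (hA : 2 ≤ A.card)
    (hp : A.card * B.card * (A * A).card ≤ p ^ 2) (hf : ∀ x ∈ B, 0 ≤ f x) {s : ℝ} (hs : 0 ≤ s) :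
    s ^ 2 * A.addEnergy (dyadicLevel B f s) ≤
      10 ^ 8 * energyBound A.card (A * A).card (∑ x ∈ B, f x ^ 2) (∑ x ∈ B, f x) := by
  have hS : A.card * (dyadicLevel B f s).card * (A * A).card ≤ p ^ 2 := hp.trans' <| by
    gcongr
    exact dyadicLevel_subset B f s
  refine (mul_le_mul_of_nonneg_left (addEnergy_le_energyBound hA hS) (sq_nonneg s)).trans ?_
  rw [mul_left_comm, sq_mul_energyBound hs]
  gcongr
  exact energyBound_mono (by positivity) (by positivity) (sq_mul_card_dyadicLevel_le B f hs)
    (by positivity) (mul_card_dyadicLevel_le hf s)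

theorem sum_addConv_sq_le_energyBound_of_two_le (hA : 2 ≤ A.card)
    (hp : A.card * B.card * (A * A).card ≤ p ^ 2) (hf : ∀ x ∈ B, 0 ≤ f x)
    (hf_pos : 0 < ∑ x ∈ B, f x ^ 2) :
    ∑ y ∈ A + B, addConv A B f y ^ 2 ≤ 10 ^ 10 * max 1 (Real.log A.card) ^ 2 *
      energyBound A.card (A * A).card (∑ x ∈ B, f x ^ 2) (∑ x ∈ B, f x) := by
  have hcard : (0 : ℝ) < A.card := by positivity
  have hR : 0 ≤ ∑ x ∈ B, f x := Finset.sum_nonneg hf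
  have hmax (x : F) (hx : x ∈ B) : f x ≤ √(∑ x ∈ B, f x ^ 2) :=
    Real.le_sqrt_of_sq_le (Finset.single_le_sum (f := fun x ↦ f x ^ 2) (fun _ _ ↦ sq_nonneg _) hx)
  have hlevel := fun s hs ↦ sq_mul_addEnergy_dyadicLevel_le hA hp hf (s := s) hs
  generalize hT : ∑ x ∈ B, f x ^ 2 = T at *
  generalize hX : energyBound A.card (A * A).card T (∑ x ∈ B, f x) = X at *
  have hlow : A.card * (√T * ∑ x ∈ B, f x) ≤ X := hX ▸
    mul_sqrt_mul_le_energyBound hcard (mod_cast card_le_card_mul_self hA) hf_pos.le hR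
  have hX₀ : 0 ≤ X := (by positivity : 0 ≤ A.card * (√T * ∑ x ∈ B, f x)).trans hlow
  have hJ (x : F) (hx : x ∈ B) : f x < 2 ^ (Nat.log 2 A.card + 1) * (√T / A.card) :=
    (hmax x hx).trans_lt (lt_two_pow_natLog_mul_div (by omega) (Real.sqrt_pos.mpr hf_pos))
  refine (sum_addConv_sq_le_add_sum_addEnergy A hf (by positivity) hJ).trans ?_
  push_cast
  have hsum := Finset.sum_le_card_nsmul (Finset.range (Nat.log 2 A.card + 1)) _ _
    fun i _ ↦ hlevel (2 ^ i * (√T / A.card)) (by positivity)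
  rw [Finset.card_range, nsmul_eq_mul] at hsum
  push_cast at hsum
  have hℓ := le_max_left 1 (Real.log A.card)
  have hlog := natLog_two_add_one_le A.card
  generalize max 1 (Real.log A.card) = ℓ at *
  calc 2 * ((A.card : ℝ) ^ 2 * (√T / A.card * ∑ x ∈ B, f x)) + 8 * (Nat.log 2 A.card + 1) * _
      ≤ 2 * X + 8 * (Nat.log 2 A.card + 1) * ((Nat.log 2 A.card + 1) * (10 ^ 8 * X)) := by
        gcongr
        refine le_of_eq_of_le ?_ hlow
        field_simp
    _ ≤ 2 * (ℓ ^ 2 * X) + 8 * (3 * ℓ) * (3 * ℓ * (10 ^ 8 * X)) := by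
        gcongr
        exact le_mul_of_one_le_left hX₀ (one_le_pow₀ hℓ)
    _ ≤ 10 ^ 10 * ℓ ^ 2 * X := by
        have : 0 ≤ ℓ ^ 2 * X := by positivity
        linarith

theorem sum_addConv_sq_le_energyBound (hA : A.Nonempty)
    (hp : A.card * B.card * (A * A).card ≤ p ^ 2) (hf : ∀ x ∈ B, 0 ≤ f x) :
    ∑ y ∈ A + B, addConv A B f y ^ 2 ≤ 10 ^ 10 * max 1 (Real.log A.card) ^ 2 *
      energyBound A.card (A * A).card (∑ x ∈ B, f x ^ 2) (∑ x ∈ B, f x) := by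
  by_cases h : 2 ≤ A.card ∧ 0 < ∑ x ∈ B, f x ^ 2
  · exact sum_addConv_sq_le_energyBound_of_two_le h.1 hp hf h.2
  have hR : 0 ≤ ∑ x ∈ B, f x := Finset.sum_nonneg hf
  have hT : 0 ≤ ∑ x ∈ B, f x ^ 2 := by positivity
  have hM : (1 : ℝ) ≤ (A * A).card := mod_cast (hA.mul hA).card_pos
  have hdegenerate : A.card = 1 ∨ ∑ x ∈ B, f x ^ 2 = 0 := by
    have := hA.card_pos
    grind
  calc ∑ y ∈ A + B, addConv A B f y ^ 2 ≤ (A.card : ℝ) ^ 2 * ∑ x ∈ B, f x ^ 2 :=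
        sum_addConv_sq_le A B f
    _ ≤ (∑ x ∈ B, f x ^ 2) * ((A * A).card : ℝ) ^ 2 / A.card := by
        obtain hcard | hzero := hdegenerate
        · rw [hcard, Nat.cast_one, one_pow, one_mul, div_one]
          exact le_mul_of_one_le_right hT (one_le_pow₀ hM)
        · rw [hzero, mul_zero, zero_mul, zero_div]
    _ ≤ energyBound A.card (A * A).card (∑ x ∈ B, f x ^ 2) (∑ x ∈ B, f x) :=
        mul_sq_div_le_energyBound (by positivity) (by positivity) hR
    _ ≤ _ := by
        refine le_mul_of_one_le_left (energyBound_nonneg (by positivity) (by positivity) hT hR)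
          (one_le_mul_of_one_le_of_one_le (by norm_num) (one_le_pow₀ (le_max_left _ _)))

theorem sumEnergy_succ_le (hA : A.Nonempty) {j : ℕ}
    (hp : A.card * (j • A).card * (A * A).card ≤ p ^ 2) :
    (sumEnergy (j + 1) A : ℝ) ≤ 10 ^ 10 * max 1 (Real.log A.card) ^ 2 *
      energyBound A.card (A * A).card (sumEnergy j A) (A.card ^ j) := by
  rw [sumEnergy_succ_eq_sum_addConv_sq, sumEnergy_eq_sum_sq, ← Nat.cast_pow, ← sum_repCount]
  push_cast
  exact sum_addConv_sq_le_energyBound hA hp fun x _ ↦ Nat.cast_nonneg _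

end Field

end LineIncidence

theorem stmt_18_general : ∃ C : ℝ, 0 < C ∧ ∀ (F : Type*) [Field F] [DecidableEq F] (p : ℕ)
    [CharP F p] (k : ℕ), 1 ≤ k → ∀ A : Finset F, A.Nonempty →
      A.card * ((k - 1) • A).card * (A * A).card ≤ p ^ 2 →
        (LineIncidence.sumEnergy k A : ℝ) ≤ C * (max 1 (Real.log A.card)) ^ C *
          ((A.card : ℝ) ^ ((k : ℝ) - 3 / 2) *
              (LineIncidence.sumEnergy (k - 1) A : ℝ) ^ ((1 : ℝ) / 2) *
              ((A * A).card : ℝ) ^ ((3 : ℝ) / 2)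
            + (A.card : ℝ) ^ (2 * (k : ℝ) - 3) * ((A * A).card : ℝ)
            + (LineIncidence.sumEnergy (k - 1) A : ℝ) * ((A * A).card : ℝ) ^ 2 / A.card) := by
  refine ⟨10 ^ 10, by positivity, fun F _ _ p _ k hk A hA hp ↦ ?_⟩
  have hcard : (0 : ℝ) < A.card := mod_cast hA.card_pos
  have hbound := LineIncidence.sumEnergy_succ_le hA hp
  rw [Nat.sub_add_cancel hk] at hbound
  rw [← LineIncidence.energyBound_pow hcard (by positivity) hk]
  refine hbound.trans ?_
  have hlog : max 1 (Real.log A.card) ^ 2 ≤ max 1 (Real.log A.card) ^ (10 ^ 10 : ℝ) := by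
    rw [← Real.rpow_two]
    exact Real.rpow_le_rpow_of_exponent_le (le_max_left _ _) (by norm_num)
  have hnonneg : 0 ≤ LineIncidence.energyBound A.card (A * A).card
      (LineIncidence.sumEnergy (k - 1) A) (A.card ^ (k - 1)) :=
    LineIncidence.energyBound_nonneg (by positivity) (by positivity) (by positivity)
      (by positivity)
  gcongr

theorem stmt_18 :
    ∃ C : ℝ, 0 < C ∧
      ∀ (p : ℕ), p.Prime →
        ∀ (k : ℕ), 2 ≤ k →
          ∀ (A : Finset (ZMod p)), A.Nonempty →
            A.card * ((k - 1) • A).card * (A * A).card ≤ p ^ 2 →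
            (((((Fintype.piFinset fun _ : Fin k => A) ×ˢ
                  (Fintype.piFinset fun _ : Fin k => A)).filter
                (fun q => ∑ i, q.1 i = ∑ i, q.2 i)).card : ℝ)) ≤
              C * (max 1 (Real.log A.card)) ^ C *
                ((A.card : ℝ) ^ ((k : ℝ) - 3 / 2) *
                    (((((Fintype.piFinset fun _ : Fin (k - 1) => A) ×ˢ
                          (Fintype.piFinset fun _ : Fin (k - 1) => A)).filter
                        (fun q => ∑ i, q.1 i = ∑ i, q.2 i)).card : ℝ)) ^ ((1 : ℝ) / 2) *
                    ((A * A).card : ℝ) ^ ((3 : ℝ) / 2)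
                  + (A.card : ℝ) ^ (2 * (k : ℝ) - 3) * ((A * A).card : ℝ)
                  + (((((Fintype.piFinset fun _ : Fin (k - 1) => A) ×ˢ
                          (Fintype.piFinset fun _ : Fin (k - 1) => A)).filter
                        (fun q => ∑ i, q.1 i = ∑ i, q.2 i)).card : ℝ))
                      * ((A * A).card : ℝ) ^ 2 / (A.card : ℝ)) := by
  obtain ⟨C, hC, hbound⟩ := stmt_18_general
  exact ⟨C, hC, fun p hp k hk A hA h ↦ haveI := Fact.mk hp; hbound (ZMod p) p k (by omega) A hA h⟩
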